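/- An integer c has at least two representations of the form F_n - T_m with integers n ≥ 2 and m ≥ 2 (i.e., there exist pairs (n,m) ≠ (n₁,m₁) with n, n₁, m, m₁ ≥ 2 and c = F_n - T_m = F_{n₁} - T_{m₁}) if and only if c belongs to the set {0, 1, -1, -2, -3, 4, -5, 6, 8, -10, 11, -11, -22, -23, -41, -60, -271}. -/

import Mathlib

/-!
By Binet's formulas `F n ≈ φ ^ n / √5` and `T m ≈ τ ^ (m + 1) / (3 * τ ^ 2 - 2 * τ - 1)`, where `τ`
is the real root of `X³ - X² - X - 1`. Hence a coincidence
`F n - T m = F (n - d) - T (m - e)` with large `n` makes a linear form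
`n log φ - (m + 1) log τ + log α` small: first with `α` free of `d` and `e`, which bounds the
smaller of `d` and `e` logarithmically in `n`, then with `α` depending on that one, which bounds the
other, and finally with `α` depending on both, when the form is exponentially small in `n`.

Baker's method bounds each form from below. Siegel's lemma yields an integer combination of
monomials in `φ`, `τ`, `α` that vanishes to high order at the first integers. If the linear form
were tiny, Hermite interpolation would make the combination small at many further integers, and
Liouville's inequality would force it to vanish there, until a Vandermonde argument shows that all
its coefficients are zero. The resulting bound on `n` has hundreds of digits. Baker–Davenport
reduction with a convergent denominator of `log φ / log τ`, computed in fixed-point arithmetic,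
brings it below 60.
-/

/-- The Tribonacci sequence: T 0 = 0, T 1 = T 2 = 1,
    T (k+3) = T (k+2) + T (k+1) + T k. -/
def trib : ℕ → ℤ
  | 0 => 0
  | 1 => 1
  | 2 => 1
  | n + 3 => trib (n + 2) + trib (n + 1) + trib n

section HermiteInterpolation

open MeasureTheory Finset
open scoped Nat

/-- A smooth function together with its derivatives: `F i` is the `i`-th derivative of `F 0`. -/
def IsJet (F : ℕ → ℝ → ℝ) : Prop := ∀ i x, HasDerivAt (F i) (F (i + 1) x) x

/-- The jet of the divided difference `x ↦ (F 0 x - F 0 a) / (x - a)`. The integral formula makes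
sense at `x = a` as well. -/
noncomputable def dividedDifference (a : ℝ) (F : ℕ → ℝ → ℝ) : ℕ → ℝ → ℝ :=
  fun i x => ∫ t in (0 : ℝ)..1, t ^ i * F (i + 1) (a + t * (x - a))

theorem abs_dividedDifference_le {F : ℕ → ℝ → ℝ} {K : Set ℝ} (hK : Convex ℝ K) {i : ℕ} {M : ℝ}
    (hM : ∀ x ∈ K, |F (i + 1) x| ≤ M) {a x : ℝ} (ha : a ∈ K) (hx : x ∈ K) :
    |dividedDifference a F i x| ≤ M / (i + 1) := by
  have bound : ‖dividedDifference a F i x‖ ≤ ∫ t in (0 : ℝ)..1, t ^ i * M := by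
    refine intervalIntegral.norm_integral_le_of_norm_le zero_le_one (.of_forall fun t ht => ?_)
      ((by fun_prop : Continuous fun t : ℝ => t ^ i * M).intervalIntegrable _ _)
    rw [norm_mul, Real.norm_eq_abs, Real.norm_eq_abs, abs_of_nonneg (pow_nonneg ht.1.le _)]
    exact mul_le_mul_of_nonneg_left (hM _ (hK.add_smul_sub_mem ha hx ⟨ht.1.le, ht.2⟩))
      (pow_nonneg ht.1.le _)
  refine (Real.norm_eq_abs _ ▸ bound).trans (le_of_eq ?_)
  rw [intervalIntegral.integral_mul_const, integral_pow, one_pow, zero_pow i.succ_ne_zero]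
  ring

namespace IsJet

variable {F : ℕ → ℝ → ℝ}

theorem continuous (hF : IsJet F) (i : ℕ) : Continuous (F i) :=
  continuous_iff_continuousAt.2 fun x => (hF i x).continuousAt

theorem hasDerivAt_comp_segment (hF : IsJet F) (i : ℕ) (a x t : ℝ) :
    HasDerivAt (fun t => F i (a + t * (x - a))) (F (i + 1) (a + t * (x - a)) * (x - a)) t := by
  have inner : HasDerivAt (fun t => a + t * (x - a)) (x - a) t := by
    simpa using ((hasDerivAt_id t).mul_const (x - a)).const_add a
  exact (hF i _).comp t inner

theorem hasDerivAt_integrand (hF : IsJet F) (i : ℕ) (a t x : ℝ) :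
    HasDerivAt (fun x => t ^ i * F (i + 1) (a + t * (x - a)))
      (t ^ (i + 1) * F (i + 2) (a + t * (x - a))) x := by
  have inner : HasDerivAt (fun x => a + t * (x - a)) t x := by
    simpa using (((hasDerivAt_id x).sub_const a).const_mul t).const_add a
  exact (((hF (i + 1) (a + t * (x - a))).comp x inner).const_mul (t ^ i)).congr_deriv (by ring)

protected theorem dividedDifference (hF : IsJet F) (a : ℝ) : IsJet (dividedDifference a F) := by
  intro i x
  have integrand_cont (j : ℕ) (y : ℝ) :
      Continuous fun t : ℝ => t ^ j * F (j + 1) (a + t * (y - a)) := by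
    have := hF.continuous (j + 1)
    fun_prop
  have deriv_cont :
      Continuous fun z : ℝ × ℝ => z.2 ^ (i + 1) * F (i + 2) (a + z.2 * (z.1 - a)) := by
    have := hF.continuous (i + 2)
    fun_prop
  obtain ⟨C, hC⟩ := ((isCompact_Icc (a := x - 1) (b := x + 1)).prod
    (isCompact_Icc (a := (0 : ℝ)) (b := 1))).exists_bound_of_continuousOn deriv_cont.continuousOn
  refine (intervalIntegral.hasDerivAt_integral_of_dominated_loc_of_deriv_le (μ := volume)
    (s := Set.Ioo (x - 1) (x + 1)) (bound := fun _ => C)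
    (Ioo_mem_nhds (by linarith) (by linarith))
    (.of_forall fun y => (integrand_cont i y).aestronglyMeasurable)
    ((integrand_cont i x).intervalIntegrable _ _) (integrand_cont (i + 1) x).aestronglyMeasurable
    (.of_forall fun t ht y hy => ?_) (by simp)
    (.of_forall fun t _ y _ => hF.hasDerivAt_integrand i a t y)).2
  rw [Set.uIoc_of_le zero_le_one] at ht
  exact hC (y, t) ⟨⟨hy.1.le, hy.2.le⟩, ⟨ht.1.le, ht.2⟩⟩

theorem eq_add_mul_dividedDifference (hF : IsJet F) (a x : ℝ) :
    F 0 x = F 0 a + (x - a) * dividedDifference a F 0 x := by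
  have integrable : IntervalIntegrable
      (fun t => F 1 (a + t * (x - a)) * (x - a)) volume 0 1 := by
    have := hF.continuous 1
    exact Continuous.intervalIntegrable (by fun_prop) _ _
  have ftc := intervalIntegral.integral_eq_sub_of_hasDerivAt
    (fun t _ => hF.hasDerivAt_comp_segment 0 a x t) integrable
  rw [intervalIntegral.integral_mul_const, one_mul, zero_mul, add_zero, add_sub_cancel] at ftc
  simp only [dividedDifference, pow_zero, one_mul, zero_add]
  linarith

theorem succ_eq_dividedDifference (hF : IsJet F) (a x : ℝ) (i : ℕ) :
    F (i + 1) x =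
      (x - a) * dividedDifference a F (i + 1) x + (i + 1) * dividedDifference a F i x := by
  have hD := hF.dividedDifference a
  have deriv_sub_mul (j : ℕ) (x : ℝ) : HasDerivAt (fun y => (y - a) * dividedDifference a F j y)
      (1 * dividedDifference a F j x + (x - a) * dividedDifference a F (j + 1) x) x :=
    ((hasDerivAt_id x).sub_const a).mul (hD j x)
  induction i generalizing x with
  | zero =>
    have deriv_eq := (deriv_sub_mul 0 x).const_add (F 0 a)
    replace deriv_eq :=
      deriv_eq.congr_of_eventuallyEq (.of_forall (hF.eq_add_mul_dividedDifference a))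
    rw [(hF 0 x).unique deriv_eq]
    push_cast
    ring
  | succ i ih =>
    have deriv_eq := (deriv_sub_mul (i + 1) x).add ((hD i x).const_mul (i + 1 : ℝ))
    replace deriv_eq := deriv_eq.congr_of_eventuallyEq (.of_forall ih)
    rw [(hF (i + 1) x).unique deriv_eq]
    push_cast
    ring

theorem abs_dividedDifference_self_le (hF : IsJet F) {a δ : ℝ} {i : ℕ}
    (h : |F (i + 1) a| ≤ δ * (i + 1)!) : |dividedDifference a F i a| ≤ δ * i ! := by
  rw [hF.succ_eq_dividedDifference a a i, sub_self, zero_mul, zero_add, abs_mul,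
    abs_of_pos (by positivity : (0 : ℝ) < i + 1), Nat.factorial_succ] at h
  push_cast at h
  exact le_of_mul_le_mul_left (by linarith) (by positivity : (0 : ℝ) < i + 1)

theorem abs_dividedDifference_le_of_one_le_abs_sub (hF : IsJet F) {a b δ : ℝ} {n : ℕ}
    (hab : 1 ≤ |b - a|) (ha : |F 0 a| ≤ δ) (hb : ∀ i < n, |F i b| ≤ δ * i !) :
    ∀ i < n, |dividedDifference a F i b| ≤ δ * (i + 2) * i ! := by
  have drop_factor (y : ℝ) : |y| ≤ |(b - a) * y| := by
    rw [abs_mul]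
    exact le_mul_of_one_le_left (abs_nonneg y) hab
  intro i
  induction i with
  | zero =>
    intro hn
    have hFb : |F 0 b| ≤ δ := by simpa using hb 0 hn
    have numerator : (b - a) * dividedDifference a F 0 b = F 0 b - F 0 a := by
      linarith [hF.eq_add_mul_dividedDifference a b]
    have := (drop_factor _).trans (numerator ▸ abs_sub (F 0 b) (F 0 a))
    rw [Nat.cast_zero, Nat.factorial_zero, Nat.cast_one]
    linarith
  | succ i ih =>
    intro hn
    have numerator : (b - a) * dividedDifference a F (i + 1) b =
        F (i + 1) b - (i + 1) * dividedDifference a F i b := by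
      linarith [hF.succ_eq_dividedDifference a b i]
    calc |dividedDifference a F (i + 1) b|
        ≤ |F (i + 1) b - (i + 1) * dividedDifference a F i b| := numerator ▸ drop_factor _
      _ ≤ |F (i + 1) b| + (i + 1) * |dividedDifference a F i b| := by
          refine (abs_sub _ _).trans_eq ?_
          rw [abs_mul, abs_of_pos (by positivity : (0 : ℝ) < i + 1)]
      _ ≤ δ * (i + 1)! + (i + 1) * (δ * (i + 2) * i !) := by
          gcongr
          exacts [hb _ hn, ih (by omega)]
      _ = δ * ((i + 1 : ℕ) + 2) * (i + 1)! := by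
          rw [Nat.factorial_succ]
          push_cast
          ring

theorem abs_dividedDifference_le_at_nodes (hF : IsJet F) {s : Finset ℝ}
    (hsep : (s : Set ℝ).Pairwise fun a b => 1 ≤ |a - b|) {m : ℕ} {c : ℝ → ℕ} (hc : ∀ b ∈ s, c b ≤ m)
    {δ : ℝ} (hδ : 0 ≤ δ) (hsmall : ∀ b ∈ s, ∀ i < c b, |F i b| ≤ δ * i !) {a : ℝ} (ha : a ∈ s)
    (hca : 0 < c a) :
    ∀ b ∈ s, ∀ i < Function.update c a (c a - 1) b,
      |dividedDifference a F i b| ≤ δ * (m + 1) * i ! := by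
  intro b hb i hi
  obtain rfl | hba := eq_or_ne b a
  · rw [Function.update_self] at hi
    have := hF.abs_dividedDifference_self_le (hsmall b hb (i + 1) (by omega))
    have : δ ≤ δ * (m + 1) := le_mul_of_one_le_right hδ (by simp)
    exact ‹_ ≤ δ * (i ! : ℝ)›.trans (by gcongr)
  · rw [Function.update_of_ne hba] at hi
    have hFa : |F 0 a| ≤ δ := by simpa using hsmall a ha 0 hca
    refine (hF.abs_dividedDifference_le_of_one_le_abs_sub (hsep hb ha hba) hFa (hsmall b hb) i
      hi).trans ?_
    have : (i : ℝ) + 1 ≤ m := by exact_mod_cast (show i + 1 ≤ m from hi.trans_le (hc b hb))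
    gcongr δ * ?_ * _
    linarith

/-- Passing to the divided difference at a node of positive multiplicity lowers that multiplicity
by one. -/
theorem abs_le_of_small_at_nodes {K : Set ℝ} (hK : Convex ℝ K) {R : ℝ} (hR : 1 ≤ R)
    (hKR : ∀ x ∈ K, ∀ y ∈ K, |x - y| ≤ R) {s : Finset ℝ} (hsK : ∀ a ∈ s, a ∈ K)
    (hsep : (s : Set ℝ).Pairwise fun a b => 1 ≤ |a - b|) {m N : ℕ} {c : ℝ → ℕ}
    (hc : ∀ a ∈ s, c a ≤ m) (hN : ∑ a ∈ s, c a = N) (hF : IsJet F) {M δ : ℝ}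
    (hM : ∀ x ∈ K, |F N x| ≤ M) (hδ : 0 ≤ δ) (hsmall : ∀ a ∈ s, ∀ i < c a, |F i a| ≤ δ * i !)
    {x : ℝ} (hx : x ∈ K) : |F 0 x| ≤ M * (R ^ N / N !) + δ * (2 * R * (m + 1)) ^ N := by
  induction N generalizing c F M δ x with
  | zero => simpa using (hM x hx).trans (le_add_of_nonneg_right hδ)
  | succ N ih =>
    obtain ⟨a, ha, hca⟩ : ∃ a ∈ s, 0 < c a := by
      by_contra! hzero
      rw [sum_eq_zero fun a ha => Nat.le_zero.1 (hzero a ha)] at hN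
      omega
    have hc_update : ∀ b ∈ s, Function.update c a (c a - 1) b ≤ m := fun b hb =>
      (update_le_self_iff.2 (Nat.sub_le _ _) b).trans (hc b hb)
    have hN_update : ∑ b ∈ s, Function.update c a (c a - 1) b = N := by
      rw [sum_update_of_mem ha, sdiff_singleton_eq_erase]
      rw [← add_sum_erase _ _ ha] at hN
      omega
    have quotient_le : |dividedDifference a F 0 x| ≤
        M / (N + 1) * (R ^ N / N !) + δ * (m + 1) * (2 * R * (m + 1)) ^ N :=
      ih hc_update hN_update (hF.dividedDifference a)
        (fun y hy => abs_dividedDifference_le hK hM (hsK a ha) hy) (by positivity)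
        (hF.abs_dividedDifference_le_at_nodes hsep hc hδ hsmall ha hca) hx
    have hFa : |F 0 a| ≤ δ := by simpa using hsmall a ha 0 hca
    have δ_le : δ ≤ δ * (R * (m + 1) * (2 * R * (m + 1)) ^ N) := by
      have : 1 ≤ R * (m + 1) := one_le_mul_of_one_le_of_one_le hR (by simp)
      exact le_mul_of_one_le_right hδ
        (one_le_mul_of_one_le_of_one_le this (one_le_pow₀ (by linarith)))
    calc |F 0 x| = |F 0 a + (x - a) * dividedDifference a F 0 x| := by
          rw [← hF.eq_add_mul_dividedDifference]
      _ ≤ |F 0 a| + |x - a| * |dividedDifference a F 0 x| := by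
          rw [← abs_mul]
          exact abs_add_le _ _
      _ ≤ δ * (R * (m + 1) * (2 * R * (m + 1)) ^ N) + R *
            (M / (N + 1) * (R ^ N / N !) + δ * (m + 1) * (2 * R * (m + 1)) ^ N) := by
          gcongr
          exacts [hFa.trans δ_le, hKR x hx a (hsK a ha)]
      _ = M * (R ^ (N + 1) / (N + 1)!) + δ * (2 * R * (m + 1)) ^ (N + 1) := by
          rw [Nat.factorial_succ]
          push_cast
          field_simp
          ring

end IsJet

end HermiteInterpolation

section IntegralMultiplier

open Matrix Finset
open scoped Nat Kronecker

attribute [local instance] Matrix.linftyOpNormedRing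

variable {ι κ : Type*} [Fintype ι] [DecidableEq ι] [Fintype κ]
  {v : ι → ℝ} {w : κ → ℝ} {r s c d : ℝ}

theorem linfty_opNorm_le_iff {A : Matrix ι ι ℝ} (hc : 0 ≤ c) :
    ‖A‖ ≤ c ↔ ∀ i, ∑ j, |A i j| ≤ c := by
  lift c to NNReal using hc
  simp only [linfty_opNorm_def, NNReal.coe_le_coe, Finset.sup_le_iff, mem_univ, true_imp_iff]
  exact forall_congr' fun i => by simp [← NNReal.coe_le_coe]

/-- `r` maps the entries of `v` to integral combinations of them, through a matrix whose
`ℓ^∞`-operator norm is at most `c`. When `v` is a basis of a number field this makes `r` an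
algebraic integer all of whose conjugates are bounded by `c`. -/
def IsIntegralMultiplier (v : ι → ℝ) (r c : ℝ) : Prop :=
  ∃ M : Matrix ι ι ℤ, (Int.castRingHom ℝ).mapMatrix M *ᵥ v = r • v ∧
    ‖(Int.castRingHom ℝ).mapMatrix M‖ ≤ c

namespace IsIntegralMultiplier

theorem mono (h : IsIntegralMultiplier v r c) (hcd : c ≤ d) : IsIntegralMultiplier v r d := by
  obtain ⟨M, hM, hc⟩ := h
  exact ⟨M, hM, hc.trans hcd⟩

theorem zero : IsIntegralMultiplier v 0 0 := ⟨0, by simp, by simp⟩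

theorem one [Nonempty ι] : IsIntegralMultiplier v 1 1 := ⟨1, by simp, by simp⟩

theorem mul (hr : IsIntegralMultiplier v r c) (hs : IsIntegralMultiplier v s d) :
    IsIntegralMultiplier v (r * s) (c * d) := by
  obtain ⟨M, hM, hc⟩ := hr
  obtain ⟨N, hN, hd⟩ := hs
  refine ⟨M * N, ?_, ?_⟩
  · rw [map_mul, ← mulVec_mulVec, hN, mulVec_smul, hM, smul_smul, mul_comm]
  · rw [map_mul]
    exact (norm_mul_le _ _).trans (mul_le_mul hc hd (norm_nonneg _) ((norm_nonneg _).trans hc))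

theorem pow [Nonempty ι] (h : IsIntegralMultiplier v r c) (n : ℕ) :
    IsIntegralMultiplier v (r ^ n) (c ^ n) := by
  induction n with
  | zero => simpa using one
  | succ n ih => simpa only [pow_succ] using ih.mul h

theorem add (hr : IsIntegralMultiplier v r c) (hs : IsIntegralMultiplier v s d) :
    IsIntegralMultiplier v (r + s) (c + d) := by
  obtain ⟨M, hM, hc⟩ := hr
  obtain ⟨N, hN, hd⟩ := hs
  refine ⟨M + N, by rw [map_add, add_mulVec, hM, hN, add_smul], ?_⟩
  rw [map_add]
  exact (norm_add_le _ _).trans (add_le_add hc hd)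

theorem sum {E : Type*} {S : Finset E} {r c : E → ℝ}
    (h : ∀ e ∈ S, IsIntegralMultiplier v (r e) (c e)) :
    IsIntegralMultiplier v (∑ e ∈ S, r e) (∑ e ∈ S, c e) := by
  classical
  induction S using Finset.induction_on with
  | empty => simpa using zero
  | insert e S he ih =>
    rw [sum_insert he, sum_insert he]
    exact (h e (mem_insert_self e S)).add (ih fun i hi => h i (mem_insert_of_mem hi))

theorem intCast [Nonempty ι] (z : ℤ) : IsIntegralMultiplier v z |(z : ℝ)| := by
  refine ⟨(z : Matrix ι ι ℤ), ?_, ?_⟩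
  · rw [map_intCast, intCast_mulVec]
  · rw [map_intCast, ← diagonal_intCast, linfty_opNorm_diagonal]
    simp [Pi.norm_def, Finset.sup_const]

theorem abs_le (h : IsIntegralMultiplier v r c) (hv : v ≠ 0) : |r| ≤ c := by
  obtain ⟨M, hM, hc⟩ := h
  have := (linfty_opNorm_mulVec _ v).trans (mul_le_mul_of_nonneg_right hc (norm_nonneg v))
  rw [hM, norm_smul] at this
  exact le_of_mul_le_mul_right this (norm_pos_iff.2 hv)

theorem kronecker [DecidableEq κ] (hr : IsIntegralMultiplier v r c)
    (hs : IsIntegralMultiplier w s d) :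
    IsIntegralMultiplier (fun p : ι × κ => v p.1 * w p.2) (r * s) (c * d) := by
  obtain ⟨M, hM, hc⟩ := hr
  obtain ⟨N, hN, hd⟩ := hs
  have hc0 := (norm_nonneg _).trans hc
  have hd0 := (norm_nonneg _).trans hd
  refine ⟨M ⊗ₖ N, ?_, (linfty_opNorm_le_iff (mul_nonneg hc0 hd0)).2 fun p => ?_⟩
  · funext p
    have hMp := congrFun hM p.1
    have hNp := congrFun hN p.2
    simp only [mulVec, dotProduct, Pi.smul_apply, smul_eq_mul, RingHom.mapMatrix_apply,
      map_apply, eq_intCast] at hMp hNp ⊢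
    rw [mul_mul_mul_comm, ← hMp, ← hNp, Fintype.sum_mul_sum, ← Fintype.sum_prod_type']
    exact sum_congr rfl fun q _ => by rw [kroneckerMap_apply]; push_cast; ring
  · have hMp := (linfty_opNorm_le_iff hc0).1 hc p.1
    have hNp := (linfty_opNorm_le_iff hd0).1 hd p.2
    refine le_trans (le_of_eq ?_) (mul_le_mul hMp hNp (sum_nonneg fun _ _ => abs_nonneg _) hc0)
    rw [Fintype.sum_mul_sum, ← Fintype.sum_prod_type']
    exact sum_congr rfl fun q _ => by simp [abs_mul]

theorem exists_det_ne_zero (h : IsIntegralMultiplier v r c) (hv : LinearIndependent ℤ v)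
    (hr : r ≠ 0) : ∃ M : Matrix ι ι ℤ, (Int.castRingHom ℝ).mapMatrix M *ᵥ v = r • v ∧
      ‖(Int.castRingHom ℝ).mapMatrix M‖ ≤ c ∧ M.det ≠ 0 := by
  obtain ⟨M, hM, hc⟩ := h
  refine ⟨M, hM, hc, fun hdet => ?_⟩
  obtain ⟨u, hu, huM⟩ := exists_vecMul_eq_zero_iff.2 hdet
  have orthogonal : (fun i => (u i : ℝ)) ⬝ᵥ v = 0 := by
    have cast_vecMul : (fun i => (u i : ℝ)) ᵥ* (Int.castRingHom ℝ).mapMatrix M = 0 := by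
      funext j
      have := congrArg (Int.cast : ℤ → ℝ) (congrFun huM j)
      simpa [vecMul, dotProduct] using this
    have := dotProduct_mulVec (fun i => (u i : ℝ)) ((Int.castRingHom ℝ).mapMatrix M) v
    rw [cast_vecMul, zero_dotProduct, hM, dotProduct_smul] at this
    exact (smul_eq_zero.1 this).resolve_left hr
  refine hu (funext (Fintype.linearIndependent_iff.1 hv u ?_))
  simpa [dotProduct] using orthogonal

/-- Liouville's inequality: the determinant of the matrix of `r` is a nonzero integer. -/
theorem abs_le_abs_mul (h : IsIntegralMultiplier v r c) (hv : LinearIndependent ℤ v) (hr : r ≠ 0)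
    (hc : 1 ≤ c) (i : ι) :
    |v i| ≤ |r| * ((Fintype.card ι)! * c ^ Fintype.card ι * ∑ j, |v j|) := by
  obtain ⟨M, hM, hMc, hdet⟩ := h.exists_det_ne_zero hv hr
  set A := (Int.castRingHom ℝ).mapMatrix M
  have one_le_det : 1 ≤ |A.det| := by
    rw [← RingHom.map_det, eq_intCast]
    exact_mod_cast Int.one_le_abs hdet
  have entry_le (j k : ι) : |A j k| ≤ c :=
    (single_le_sum (f := fun k => |A j k|) (fun _ _ => abs_nonneg _) (mem_univ k)).trans
      ((linfty_opNorm_le_iff (by linarith)).1 hMc j)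
  have adjugate_le (j : ι) : |A.adjugate i j| ≤ (Fintype.card ι)! * c ^ Fintype.card ι := by
    rw [adjugate_apply, ← nsmul_eq_mul]
    refine det_le (abv := AbsoluteValue.abs) fun k l => ?_
    rw [AbsoluteValue.abs_apply, updateRow_apply]
    split_ifs
    · rw [Pi.single_apply]
      split_ifs
      · simpa using hc
      · simpa using zero_le_one.trans hc
    · exact entry_le k l
  have cramer : A.det * v i = r * ∑ j, A.adjugate i j * v j := by
    have := congrFun (congrArg (A.adjugate *ᵥ ·) hM) i
    simp only [mulVec_mulVec, adjugate_mul, smul_mulVec, mulVec_smul, one_mulVec] at this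
    exact this
  calc |v i| ≤ |A.det| * |v i| := le_mul_of_one_le_left (abs_nonneg _) one_le_det
    _ = |r| * |∑ j, A.adjugate i j * v j| := by rw [← abs_mul, cramer, abs_mul]
    _ ≤ |r| * ∑ j, |A.adjugate i j| * |v j| := by
        simp only [← abs_mul (A.adjugate i _)]
        exact mul_le_mul_of_nonneg_left (abs_sum_le_sum_abs _ _) (abs_nonneg r)
    _ ≤ |r| * ((Fintype.card ι)! * c ^ Fintype.card ι * ∑ j, |v j|) := by
        rw [mul_sum (s := univ) (a := _ * _)]
        exact mul_le_mul_of_nonneg_left (sum_le_sum fun j _ =>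
          mul_le_mul_of_nonneg_right (adjugate_le j) (abs_nonneg _)) (abs_nonneg r)

end IsIntegralMultiplier

theorem exists_small_int_vec {E κ : Type*} [Fintype E] [Fintype κ] {A : Matrix E κ ℤ} {c : ℝ}
    (hc : 1 ≤ c) (hA : ∀ e k, |(A e k : ℝ)| ≤ c) (hcard : Fintype.card κ = 2 * Fintype.card E)
    (hE : 0 < Fintype.card E) :
    ∃ p : κ → ℤ, p ≠ 0 ∧ A *ᵥ p = 0 ∧ ∀ k, |(p k : ℝ)| ≤ Fintype.card κ * c := by
  let := Matrix.seminormedAddCommGroup (m := E) (n := κ) (α := ℤ)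
  obtain ⟨p, hp, hAp, hp_norm⟩ := Int.Matrix.exists_ne_zero_int_vec_norm_le A (by omega) hE
  have exponent_eq_one : (Fintype.card E : ℝ) / (Fintype.card κ - Fintype.card E) = 1 := by
    rw [hcard]
    push_cast
    field_simp
    ring
  rw [exponent_eq_one, Real.rpow_one] at hp_norm
  refine ⟨p, hp, hAp, fun k => ?_⟩
  calc |(p k : ℝ)| = ‖p k‖ := (Int.norm_eq_abs _).symm
    _ ≤ Fintype.card κ * max 1 ‖A‖ := (norm_le_pi_norm p k).trans hp_norm
    _ ≤ Fintype.card κ * c := by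
        gcongr
        refine max_le hc ((Matrix.norm_le_iff (by linarith)).2 fun e k => ?_)
        exact (Int.norm_eq_abs _).trans_le (hA e k)

/-- Siegel's lemma over the order whose elements are the integral multipliers of `v`. -/
theorem exists_small_int_relation {E : Type*} [Fintype E] {r : E → κ → ℝ} (hv : v ≠ 0) (hc : 1 ≤ c)
    (hr : ∀ e k, IsIntegralMultiplier v (r e k) c) (hE : 0 < Fintype.card E)
    (hcard : Fintype.card κ = 2 * (Fintype.card E * Fintype.card ι)) :
    ∃ p : κ → ℤ, p ≠ 0 ∧ (∀ k, |(p k : ℝ)| ≤ Fintype.card κ * c) ∧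
      ∀ e, ∑ k, p k * r e k = 0 := by
  choose M hM hMc using hr
  obtain ⟨i, hi⟩ := Function.ne_iff.1 hv
  have : Nonempty ι := ⟨i⟩
  let A : Matrix (E × ι) κ ℤ := .of fun q k => M q.1 k i q.2
  obtain ⟨p, hp, hAp, hp_le⟩ := exists_small_int_vec (A := A) hc
    (fun q k => (single_le_sum (f := fun j => |(M q.1 k i j : ℝ)|) (fun _ _ => abs_nonneg _)
      (mem_univ q.2)).trans ((linfty_opNorm_le_iff (by linarith)).1 (hMc q.1 k) i))
    (by rwa [Fintype.card_prod]) (by rw [Fintype.card_prod]; exact Nat.mul_pos hE Fintype.card_pos)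
  refine ⟨p, hp, hp_le, fun e => ?_⟩
  have row_eq_zero (j : ι) : ∑ k, (p k : ℝ) * M e k i j = 0 := by
    have := congrFun hAp (e, j)
    simp only [A, mulVec, dotProduct, of_apply, Pi.zero_apply] at this
    exact_mod_cast (sum_congr rfl fun k _ => mul_comm _ _).trans this
  have row_mulVec (k : κ) : r e k * v i = ∑ j, (M e k i j : ℝ) * v j := by
    simpa [mulVec, dotProduct] using (congrFun (hM e k) i).symm
  refine (mul_eq_zero.1 ?_).resolve_right hi
  simp only [sum_mul, mul_assoc, row_mulVec, mul_sum]
  rw [sum_comm]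
  exact sum_eq_zero fun j _ => by simp only [← mul_assoc, ← sum_mul, row_eq_zero, zero_mul]

end IntegralMultiplier

section AlgebraicNumbers

open Polynomial IntermediateField
open scoped goldenRatio

theorem linearDisjoint_adjoin_of_coprime {K E : Type*} [Field K] [Field E] [Algebra K E] {x y : E}
    (hx : IsIntegral K x) (hy : IsIntegral K y)
    (hxy : (minpoly K x).natDegree.Coprime (minpoly K y).natDegree) :
    K⟮x⟯.LinearDisjoint K⟮y⟯ :=
  .of_finrank_coprime (by rwa [adjoin.finrank hx, adjoin.finrank hy])

theorem linearIndependent_pow_mul_pow {K E : Type*} [Field K] [Field E] [Algebra K E] {x y : E}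
    (hxy : K⟮x⟯.LinearDisjoint K⟮y⟯) :
    LinearIndependent K fun p : Fin (minpoly K x).natDegree × Fin (minpoly K y).natDegree =>
      x ^ (p.1 : ℕ) * y ^ (p.2 : ℕ) := by
  have gen_pow (z : E) : LinearIndependent K fun i : Fin (minpoly K z).natDegree =>
      AdjoinSimple.gen K z ^ (i : ℕ) := by
    have := linearIndependent_pow (K := K) (AdjoinSimple.gen K z)
    rwa [minpoly_gen] at this
  simpa using hxy.linearIndependent_mul (gen_pow x) (gen_pow y)

theorem exists_cube_eq_sq_add_self_add_one :
    ∃ x : ℝ, x ∈ Set.Ioo 1.839 1.84 ∧ x ^ 3 = x ^ 2 + x + 1 := by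
  have hc : ContinuousOn (fun x : ℝ => x ^ 3 - (x ^ 2 + x + 1)) (Set.Icc 1.839 1.84) := by fun_prop
  obtain ⟨x, hx, hx0⟩ := intermediate_value_Ioo (by norm_num) hc (by norm_num : (0 : ℝ) ∈ _)
  exact ⟨x, hx, sub_eq_zero.1 hx0⟩

/-- The real root of `X³ - X² - X - 1`, the growth rate of the Tribonacci sequence. -/
noncomputable def tribonacciConst : ℝ := exists_cube_eq_sq_add_self_add_one.choose

local notation "τ" => tribonacciConst

theorem tribonacciConst_gt : 1.839 < τ := exists_cube_eq_sq_add_self_add_one.choose_spec.1.1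

theorem tribonacciConst_lt : τ < 1.84 := exists_cube_eq_sq_add_self_add_one.choose_spec.1.2

theorem tribonacciConst_cube : τ ^ 3 = τ ^ 2 + τ + 1 :=
  exists_cube_eq_sq_add_self_add_one.choose_spec.2

theorem tribonacciConst_pos : 0 < τ := by linarith [tribonacciConst_gt]

theorem tribonacciConst_inv_eq : τ⁻¹ = τ ^ 2 - τ - 1 := by
  have := tribonacciConst_pos.ne'
  field_simp
  linarith [tribonacciConst_cube]

theorem goldenRatio_gt : 1.618 < φ := by
  nlinarith [Real.goldenRatio_sq, Real.goldenRatio_pos]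

theorem goldenRatio_lt : φ < 1.6181 := by
  nlinarith [Real.goldenRatio_sq, Real.goldenRatio_pos]

theorem minpoly_goldenRatio : minpoly ℚ φ = X ^ 2 - X - 1 := by
  have monic : (X ^ 2 - X - 1 : ℚ[X]).Monic := by monicity!
  have natDegree : (X ^ 2 - X - 1 : ℚ[X]).natDegree = 2 := by compute_degree!
  refine (minpoly.eq_of_irreducible_of_monic ?_ (by simp [Real.goldenRatio_sq]) monic).symm
  rw [monic.irreducible_iff_roots_eq_zero_of_degree_le_three (by omega) (by omega),
    Multiset.eq_zero_iff_forall_notMem]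
  intro q hq
  rw [mem_roots monic.ne_zero, IsRoot.def] at hq
  have root : (q : ℝ) ^ 2 - q - 1 = 0 := by exact_mod_cast (by simpa using hq)
  have factor : ((q : ℝ) - φ) * (q - ψ) = 0 := by
    linear_combination root - (q : ℝ) * Real.goldenRatio_add_goldenConj +
      Real.goldenRatio_mul_goldenConj
  rcases mul_eq_zero.1 factor with h | h
  · exact Real.goldenRatio_irrational ⟨q, sub_eq_zero.1 h⟩
  · exact Real.goldenConj_irrational ⟨q, sub_eq_zero.1 h⟩

theorem minpoly_tribonacciConst : minpoly ℚ τ = X ^ 3 - X ^ 2 - X - 1 := by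
  have monic : (X ^ 3 - X ^ 2 - X - 1 : ℚ[X]).Monic := by monicity!
  have natDegree : (X ^ 3 - X ^ 2 - X - 1 : ℚ[X]).natDegree = 3 := by compute_degree!
  refine (minpoly.eq_of_irreducible_of_monic ?_ (by simp [tribonacciConst_cube]; ring) monic).symm
  rw [monic.irreducible_iff_roots_eq_zero_of_degree_le_three (by omega) (by omega),
    Multiset.eq_zero_iff_forall_notMem]
  intro q hq
  rw [mem_roots monic.ne_zero, IsRoot.def] at hq
  have monic_int : (X ^ 3 - X ^ 2 - X - 1 : ℤ[X]).Monic := by monicity!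
  obtain ⟨z, rfl⟩ := isInteger_of_is_root_of_monic monic_int (r := q) (by simpa using hq)
  have root : z ^ 3 - z ^ 2 - z - 1 = 0 := by
    simp only [eval_sub, eval_pow, eval_X, eval_one, algebraMap_int_eq, eq_intCast] at hq
    exact_mod_cast hq
  have isUnit : z * (z ^ 2 - z - 1) = 1 := by linarith
  rcases Int.isUnit_iff.1 (.of_mul_eq_one _ isUnit) with rfl | rfl <;> norm_num at root

theorem natDegree_minpoly_goldenRatio : (minpoly ℚ φ).natDegree = 2 := by
  rw [minpoly_goldenRatio]
  compute_degree!

theorem natDegree_minpoly_tribonacciConst : (minpoly ℚ τ).natDegree = 3 := by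
  rw [minpoly_tribonacciConst]
  compute_degree!

theorem linearDisjoint_goldenRatio_tribonacciConst : ℚ⟮φ⟯.LinearDisjoint ℚ⟮τ⟯ := by
  refine linearDisjoint_adjoin_of_coprime (minpoly.ne_zero_iff.1 ?_) (minpoly.ne_zero_iff.1 ?_) ?_
  · exact ne_zero_of_natDegree_gt (natDegree_minpoly_goldenRatio ▸ two_pos)
  · exact ne_zero_of_natDegree_gt (natDegree_minpoly_tribonacciConst ▸ three_pos)
  · rw [natDegree_minpoly_goldenRatio, natDegree_minpoly_tribonacciConst]
    norm_num

/-- A basis of the order `ℤ[φ, τ]`. -/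
noncomputable def orderBasis (p : Fin 2 × Fin 3) : ℝ := φ ^ (p.1 : ℕ) * τ ^ (p.2 : ℕ)

theorem linearIndependent_orderBasis : LinearIndependent ℤ orderBasis := by
  have := linearIndependent_pow_mul_pow linearDisjoint_goldenRatio_tribonacciConst
  rw [natDegree_minpoly_goldenRatio, natDegree_minpoly_tribonacciConst] at this
  exact this.restrict_scalars' ℤ

theorem zpow_goldenRatio_eq_zpow_tribonacciConst {k l : ℤ} (h : φ ^ k = τ ^ l) :
    k = 0 ∧ l = 0 := by
  have irrational_pow (n : ℕ) : Irrational (φ ^ (n + 1)) := by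
    rw [← Real.goldenRatio_mul_fib_succ_add_fib]
    exact (Real.goldenRatio_irrational.mul_natCast (Nat.fib_pos.2 n.succ_pos).ne').add_natCast _
  have mem_bot : φ ^ k ∈ (⊥ : IntermediateField ℚ ℝ) := by
    rw [← linearDisjoint_goldenRatio_tribonacciConst.inf_eq_bot]
    exact ⟨zpow_mem (mem_adjoin_simple_self ℚ φ) k, h ▸ zpow_mem (mem_adjoin_simple_self ℚ τ) l⟩
  obtain ⟨q, hq⟩ := IntermediateField.mem_bot.1 mem_bot
  have hk : k = 0 := by
    rcases k with (_ | n) | n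
    · rfl
    · exact (irrational_pow n ⟨q, by exact_mod_cast hq⟩).elim
    · exact (irrational_pow n ⟨q⁻¹, by
        rw [zpow_negSucc, eq_ratCast] at hq
        rw [Rat.cast_inv, hq, inv_inv]⟩).elim
  rw [hk, zpow_zero] at h
  refine ⟨hk, (zpow_eq_one_iff_right₀ tribonacciConst_pos.le ?_).1 h.symm⟩
  linarith [tribonacciConst_gt]

theorem orderBasis_pos (p : Fin 2 × Fin 3) : 0 < orderBasis p :=
  mul_pos (pow_pos Real.goldenRatio_pos _) (pow_pos tribonacciConst_pos _)

theorem orderBasis_ne_zero : orderBasis ≠ 0 := fun h => (orderBasis_pos 0).ne' (congrFun h 0)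

theorem sum_orderBasis_le : ∑ p, orderBasis p ≤ 16.5 := by
  have factored : ∑ p, orderBasis p = (1 + φ) * (1 + τ + τ ^ 2) := by
    simp only [orderBasis, Fintype.sum_prod_type, Fin.sum_univ_two, Fin.sum_univ_three]
    norm_num
    ring
  have := tribonacciConst_pos
  have := Real.goldenRatio_pos
  calc ∑ p, orderBasis p = (1 + φ) * (1 + τ + τ ^ 2) := factored
    _ ≤ (1 + 1.6181) * (1 + 1.84 + 1.84 ^ 2) := by
        gcongr
        exacts [goldenRatio_lt.le, tribonacciConst_lt.le, tribonacciConst_lt.le]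
    _ ≤ 16.5 := by norm_num

namespace IsIntegralMultiplier

theorem one_le_abs_mul {r c : ℝ} (h : IsIntegralMultiplier orderBasis r c) (hr : r ≠ 0)
    (hc : 1 ≤ c) : 1 ≤ |r| * (12000 * c ^ 6) := by
  have liouville := h.abs_le_abs_mul linearIndependent_orderBasis hr hc 0
  simp only [abs_of_pos (orderBasis_pos _), Fintype.card_prod, Fintype.card_fin] at liouville
  calc (1 : ℝ) = orderBasis 0 := by simp [orderBasis]
    _ ≤ |r| * (720 * c ^ 6 * ∑ p, orderBasis p) := by simpa [Nat.factorial] using liouville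
    _ ≤ |r| * (720 * c ^ 6 * 16.5) := by
        gcongr
        exact sum_orderBasis_le
    _ ≤ |r| * (12000 * c ^ 6) := by
        nlinarith [mul_nonneg (abs_nonneg r) (by positivity : 0 ≤ c ^ 6)]

theorem of_left {r c : ℝ} (h : IsIntegralMultiplier (fun i : Fin 2 => φ ^ (i : ℕ)) r c) :
    IsIntegralMultiplier orderBasis r c := by
  have := h.kronecker (one (v := fun j : Fin 3 => τ ^ (j : ℕ)))
  rwa [mul_one, mul_one] at this

theorem of_right {r c : ℝ} (h : IsIntegralMultiplier (fun j : Fin 3 => τ ^ (j : ℕ)) r c) :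
    IsIntegralMultiplier orderBasis r c := by
  have := (one (v := fun i : Fin 2 => φ ^ (i : ℕ))).kronecker h
  rwa [one_mul, one_mul] at this

theorem goldenRatio : IsIntegralMultiplier orderBasis φ 3 := by
  refine of_left ⟨!![0, 1; 1, 1], ?_, (linfty_opNorm_le_iff three_pos.le).2 fun i => ?_⟩
  · funext i
    fin_cases i
    · simp [Matrix.mulVec, dotProduct]
    · have sq : 1 + φ = φ * φ := by linarith [Real.goldenRatio_sq]
      simpa [Matrix.mulVec, dotProduct] using sq
  · fin_cases i <;> norm_num

theorem goldenRatio_inv : IsIntegralMultiplier orderBasis φ⁻¹ 3 := by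
  refine of_left ⟨!![-1, 1; 1, 0], ?_, (linfty_opNorm_le_iff three_pos.le).2 fun i => ?_⟩
  · funext i
    have inv : -1 + φ = φ⁻¹ := by
      rw [Real.inv_goldenRatio]
      linarith [Real.goldenRatio_add_goldenConj]
    fin_cases i
    · simpa [Matrix.mulVec, dotProduct] using inv
    · simpa [Matrix.mulVec, dotProduct] using (inv_mul_cancel₀ Real.goldenRatio_ne_zero).symm
  · fin_cases i <;> norm_num

theorem tribonacciConst : IsIntegralMultiplier orderBasis τ 3 := by
  refine of_right ⟨!![0, 1, 0; 0, 0, 1; 1, 1, 1], ?_,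
    (linfty_opNorm_le_iff three_pos.le).2 fun i => ?_⟩
  · funext i
    fin_cases i
    · simp [Matrix.mulVec, dotProduct, Fin.sum_univ_three]
    · simp [Matrix.mulVec, dotProduct, Fin.sum_univ_three, pow_two]
    · have cube : 1 + τ + τ ^ 2 = τ * τ ^ 2 := by linarith [tribonacciConst_cube]
      simpa [Matrix.mulVec, dotProduct, Fin.sum_univ_three] using cube
  · fin_cases i <;> norm_num [Fin.sum_univ_succ]

theorem tribonacciConst_inv : IsIntegralMultiplier orderBasis τ⁻¹ 3 := by
  refine of_right ⟨!![-1, -1, 1; 1, 0, 0; 0, 1, 0], ?_,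
    (linfty_opNorm_le_iff three_pos.le).2 fun i => ?_⟩
  · have hτ := tribonacciConst_pos.ne'
    have inv : -1 + -τ + τ ^ 2 = τ⁻¹ := by
      rw [tribonacciConst_inv_eq]
      ring
    funext i
    fin_cases i
    · simpa [Matrix.mulVec, dotProduct, Fin.sum_univ_three] using inv
    all_goals simp [Matrix.mulVec, dotProduct, Fin.sum_univ_three, field]
  · fin_cases i <;> norm_num [Fin.sum_univ_succ]

end IsIntegralMultiplier

theorem sum_fiber_eq_zero_of_power_sums {K ι : Type*} [Field K] [DecidableEq K] {S : Finset ι}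
    {c v : ι → K} (h : ∀ l < S.card, ∑ i ∈ S, c i * v i ^ l = 0) {a : K} (ha : a ∈ S.image v) :
    ∑ i ∈ S with v i = a, c i = 0 := by
  have poly_sum {P : K[X]} (hP : P.natDegree < S.card) : ∑ i ∈ S, c i * P.eval (v i) = 0 := by
    simp only [eval_eq_sum_range, Finset.mul_sum, mul_left_comm (c _)]
    rw [Finset.sum_comm]
    refine Finset.sum_eq_zero fun l hl => ?_
    rw [← Finset.mul_sum, h l ((Finset.mem_range_succ_iff.1 hl).trans_lt hP), mul_zero]
  have inj : Set.InjOn (id : K → K) (S.image v) := Function.injective_id.injOn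
  have indicator : ∀ i ∈ S,
      (if v i = a then c i else 0) = c i * (Lagrange.basis (S.image v) id a).eval (v i) := by
    intro i hi
    split_ifs with hv
    · rw [hv, show eval a _ = 1 from Lagrange.eval_basis_self inj ha, mul_one]
    · rw [show eval (v i) _ = 0 from
        Lagrange.eval_basis_of_ne (v := id) (Ne.symm hv) (Finset.mem_image_of_mem v hi), mul_zero]
  rw [Finset.sum_filter, Finset.sum_congr rfl indicator]
  refine poly_sum ?_
  rw [natDegree_eq_of_degree_eq_some (Lagrange.degree_basis inj ha)]
  have := Finset.card_pos.2 ⟨a, ha⟩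
  have := Finset.card_image_le (s := S) (f := v)
  omega

end AlgebraicNumbers

section Baker

open Finset Real
open scoped goldenRatio

local notation "τ" => tribonacciConst

theorem log_goldenRatio_pos : 0 < log φ := log_pos (by linarith [goldenRatio_gt])

theorem log_goldenRatio_le_one : log φ ≤ 1 := by
  linarith [log_le_sub_one_of_pos goldenRatio_pos, goldenRatio_lt]

theorem log_tribonacciConst_pos : 0 < log τ := log_pos (by linarith [tribonacciConst_gt])

theorem log_tribonacciConst_le_one : log τ ≤ 1 := by
  linarith [log_le_sub_one_of_pos tribonacciConst_pos, tribonacciConst_lt]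

theorem exp_le_three_pow {x : ℝ} {k : ℕ} (h : x ≤ k) : exp x ≤ 3 ^ k := by
  calc exp x ≤ exp k := exp_le_exp.2 h
    _ = exp 1 ^ k := by rw [← exp_nat_mul, mul_one]
    _ ≤ 3 ^ k := by gcongr; linarith [exp_one_lt_d9]

theorem pow_div_factorial_le_inv_nine_pow {a : ℝ} {N : ℕ} (ha : 0 ≤ a) (haN : 25 * a ≤ N) :
    a ^ N / N.factorial ≤ 9⁻¹ ^ N := by
  calc a ^ N / N.factorial ≤ (25⁻¹ * N) ^ N / N.factorial := by gcongr; linarith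
    _ = 25⁻¹ ^ N * ((N : ℝ) ^ N / N.factorial) := by rw [mul_pow, mul_div_assoc]
    _ ≤ 25⁻¹ ^ N * 2.75 ^ N := by
        gcongr
        refine (pow_div_factorial_le_exp _ N.cast_nonneg _).trans ?_
        rw [← mul_one (N : ℝ), exp_nat_mul]
        gcongr
        linarith [exp_one_lt_d9]
    _ = (25⁻¹ * 2.75) ^ N := (mul_pow _ _ _).symm
    _ ≤ 9⁻¹ ^ N := by gcongr; norm_num

theorem abs_exp_sub_exp_le {u v T : ℝ} (hu : u ≤ T) (hv : v ≤ T) :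
    |exp u - exp v| ≤ exp T * |u - v| := by
  refine (convex_Iic T).norm_image_sub_le_of_norm_deriv_le (fun x _ => differentiableAt_exp)
    (fun x hx => ?_) hv hu
  rw [Real.deriv_exp, norm_of_nonneg (exp_pos x).le]
  exact exp_le_exp.2 hx

/-- A linear form `Λ = n log φ - m log τ + log (x / y)` to be bounded from below by Baker's method,
together with bounds entering the construction: `3 ^ t` dominates the exponents `n`, `m` and
`3 ^ G` the sizes of `x`, `y`, while each extrapolation multiplies the number of zeros by `r`. -/
structure LinearForm where
  (n m t G r : ℕ)
  (x y : ℝ)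

namespace LinearForm

section Parameters

variable (b : LinearForm)

/-- The number of points at which Siegel's lemma imposes zeros on the auxiliary function. -/
def h : ℕ := 756 * b.t

/-- The degree of the auxiliary polynomial in `x / y`. It is chosen so that Siegel's lemma has twice
as many unknowns as equations over `ℤ`. -/
def L₃ : ℕ := 12 * b.h * 27 ^ 2 * 100 ^ 2 * b.r ^ 2

/-- The degree of the auxiliary polynomial in `φ` and in `τ`. -/
def L : ℕ := b.G * b.L₃

/-- The loss of multiplicity of the zeros in each extrapolation. -/
def s : ℕ := 100 * b.L * b.r

/-- The multiplicity of the zeros imposed by Siegel's lemma; it leaves room for `26`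
extrapolations. -/
def K : ℕ := 27 * b.s

/-- The index set of the monomials `φ ^ i * τ ^ j * (x / y) ^ k` in the auxiliary polynomial. -/
abbrev Index := Fin b.L × Fin b.L × Fin b.L₃

/-- The number of coefficients of the auxiliary polynomial. -/
def numCoeffs : ℕ := b.L * b.L * b.L₃

/-- `3 ^ coeffExp` bounds the coefficients provided by Siegel's lemma. -/
def coeffExp : ℕ := 3 * b.t + 2 * b.K * b.t + 3 * b.L * b.h

/-- `3 ^ massExp` bounds the sum of the absolute values of the weights. -/
def massExp : ℕ := 3 * b.t + b.coeffExp + 2 * b.K * b.t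

/-- `3 ^ liouvilleExp W` is the denominator in the Liouville bound for the auxiliary values at the
points up to `W`. -/
def liouvilleExp (W : ℕ) : ℕ := 9 + 6 * (b.massExp + 3 * b.L * W) + b.L * W

/-- The exponent in the resulting lower bound `3 ^ (-bakerExp)` for the linear form. -/
def bakerExp : ℕ := 1400 * b.t * b.r * b.L ^ 3 * b.L₃

/-- The value `Λ` of the linear form. -/
noncomputable def value : ℝ := b.n * log φ - b.m * log τ + log (b.x / b.y)

/-- The hypotheses under which Baker's method applies. -/
structure Admissible : Prop where
  one_le_t : 1 ≤ b.t
  one_le_G : 1 ≤ b.G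
  one_le_r : 1 ≤ b.r
  x_pos : 0 < b.x
  y_pos : 0 < b.y
  x_multiplier : IsIntegralMultiplier orderBasis b.x (3 ^ b.G)
  y_multiplier : IsIntegralMultiplier orderBasis b.y (3 ^ b.G)
  abs_log_le : |log (b.x / b.y)| ≤ b.G
  n_le : b.L + b.n * b.L₃ ≤ 3 ^ b.t
  m_le : b.L + b.m * b.L₃ ≤ 3 ^ b.t
  L_le_n : b.L ≤ b.n
  numCoeffs_le : b.numCoeffs ≤ b.h * b.r ^ 26

end Parameters

section AuxiliaryFunction

variable {b : LinearForm}

/-- The logarithm of the monomial `φ ^ i * τ ^ j * (x / y) ^ k`. -/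
noncomputable def logMonomial (k : b.Index) : ℝ :=
  (k.1 : ℕ) * log φ + (k.2.1 : ℕ) * log τ + (k.2.2 : ℕ) * log (b.x / b.y)

/-- The exponent of `φ` once `x / y` is replaced by `φ ^ (-n) * τ ^ m`, as if `Λ = 0`. -/
def expGoldenRatio (k : b.Index) : ℤ := (k.1 : ℕ) - b.n * (k.2.2 : ℕ)

/-- The exponent of `τ` once `x / y` is replaced by `φ ^ (-n) * τ ^ m`, as if `Λ = 0`. -/
def expTribonacci (k : b.Index) : ℤ := (k.2.1 : ℕ) + b.m * (k.2.2 : ℕ)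

/-- The logarithm of the monomial `φ ^ i * τ ^ j * (x / y) ^ k` as if `Λ = 0`. -/
noncomputable def logReducedMonomial (k : b.Index) : ℝ :=
  expGoldenRatio k * log φ + expTribonacci k * log τ

/-- The coefficient of a monomial after `μ` differentiations with respect to `log φ` and `ν` with
respect to `log τ`. -/
def weight (p : b.Index → ℤ) (μ ν : ℕ) (k : b.Index) : ℤ :=
  p k * expGoldenRatio k ^ μ * expTribonacci k ^ ν

/-- The `i`-th derivative of the auxiliary function of Baker's method, whose monomials are
reduced as if `Λ = 0`. -/
noncomputable def auxFunction (p : b.Index → ℤ) (μ ν i : ℕ) (z : ℝ) : ℝ :=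
  ∑ k, weight p μ ν k * logReducedMonomial k ^ i * exp (logReducedMonomial k * z)

/-- The algebraic number that `auxFunction p μ ν 0` approximates at the integer `l`. -/
noncomputable def auxValue (p : b.Index → ℤ) (μ ν l : ℕ) : ℝ :=
  ∑ k, weight p μ ν k * exp (logMonomial k * l)

theorem isJet_auxFunction (p : b.Index → ℤ) (μ ν : ℕ) : IsJet (auxFunction p μ ν) := by
  intro i z
  refine HasDerivAt.fun_sum fun k _ => ?_
  refine ((((hasDerivAt_id z).const_mul _).exp).const_mul _).congr_deriv ?_
  simp only [pow_succ, id]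
  ring

theorem auxFunction_eq_sum_choose (p : b.Index → ℤ) (μ ν i : ℕ) (z : ℝ) :
    auxFunction p μ ν i z = ∑ j ∈ range (i + 1),
      i.choose j * log φ ^ j * log τ ^ (i - j) * auxFunction p (μ + j) (ν + (i - j)) 0 z := by
  unfold auxFunction
  simp only [Finset.mul_sum]
  rw [Finset.sum_comm]
  refine Finset.sum_congr rfl fun k _ => ?_
  rw [logReducedMonomial, add_pow, Finset.mul_sum, Finset.sum_mul]
  refine Finset.sum_congr rfl fun j _ => ?_
  simp only [weight, Int.cast_mul, Int.cast_pow, mul_pow, pow_add, pow_zero]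
  ring

theorem logMonomial_sub_logReducedMonomial (k : b.Index) :
    logMonomial k - logReducedMonomial k = (k.2.2 : ℕ) * b.value := by
  simp only [logMonomial, logReducedMonomial, value, expGoldenRatio, expTribonacci]
  push_cast
  ring

theorem card_index : Fintype.card b.Index = b.numCoeffs := by simp [numCoeffs, mul_assoc]

theorem numCoeffs_eq : b.numCoeffs = 12 * b.h * b.K ^ 2 := by
  simp only [numCoeffs, K, s]
  conv_lhs => rw [L₃]
  ring

theorem eq_of_logMonomial_eq {k k' : b.Index} (h : logMonomial k = logMonomial k')
    (h₃ : k.2.2 = k'.2.2) : k = k' := by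
  unfold logMonomial at h
  have hlog : ((k.1 : ℕ) - (k'.1 : ℕ) : ℤ) * log φ = ((k'.2.1 : ℕ) - (k.2.1 : ℕ) : ℤ) * log τ := by
    rw [h₃] at h
    push_cast
    linarith
  have hpow := congrArg exp hlog
  rw [← log_zpow, ← log_zpow, exp_log (zpow_pos goldenRatio_pos _),
    exp_log (zpow_pos tribonacciConst_pos _)] at hpow
  obtain ⟨h₁, h₂⟩ := zpow_goldenRatio_eq_zpow_tribonacciConst hpow
  ext
  · omega
  · omega
  · rw [h₃]

end AuxiliaryFunction

namespace Admissible

variable {b : LinearForm} (hb : b.Admissible)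

section Sizes

include hb

theorem one_le_h : 1 ≤ b.h := by
  have := hb.one_le_t
  unfold h
  omega

theorem h_le_L₃ : b.h ≤ b.L₃ := by
  have := Nat.one_le_pow 2 _ hb.one_le_r
  calc b.h = 1 * b.h * 1 * 1 * 1 := by ring
    _ ≤ 12 * b.h * 27 ^ 2 * 100 ^ 2 * b.r ^ 2 := by gcongr <;> norm_num

theorem L₃_le_L : b.L₃ ≤ b.L := Nat.le_mul_of_pos_left _ hb.one_le_G

theorem one_le_L : 1 ≤ b.L := hb.one_le_h.trans (hb.h_le_L₃.trans hb.L₃_le_L)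

theorem L_le : b.L ≤ 3 ^ b.t := (Nat.le_add_right _ _).trans hb.n_le

theorem L₃_le : b.L₃ ≤ 3 ^ b.t := hb.L₃_le_L.trans hb.L_le

theorem numCoeffs_le_three_pow : b.numCoeffs ≤ 3 ^ (3 * b.t) := by
  calc b.numCoeffs ≤ 3 ^ b.t * 3 ^ b.t * 3 ^ b.t :=
        Nat.mul_le_mul (Nat.mul_le_mul hb.L_le hb.L_le) hb.L₃_le
    _ = 3 ^ (3 * b.t) := by ring

theorem h_le_numCoeffs : b.h ≤ b.numCoeffs :=
  hb.h_le_L₃.trans (Nat.le_mul_of_pos_left _ (Nat.mul_pos hb.one_le_L hb.one_le_L))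

theorem one_le_s : 1 ≤ b.s :=
  Nat.mul_pos (Nat.mul_pos (by norm_num) hb.one_le_L) hb.one_le_r

theorem s_le : b.s ≤ 3 ^ (2 * b.t) := by
  have hr := hb.one_le_r
  have hh := hb.one_le_h
  have r_le : 100 * b.r ≤ b.L₃ := by
    calc 100 * b.r = 1 * 1 * 1 * 100 ^ 1 * b.r ^ 1 := by ring
      _ ≤ 12 * b.h * 27 ^ 2 * 100 ^ 2 * b.r ^ 2 := by gcongr <;> norm_num
  calc b.s = 100 * b.r * b.L := by unfold s; ring
    _ ≤ 3 ^ b.t * 3 ^ b.t := Nat.mul_le_mul (r_le.trans hb.L₃_le) hb.L_le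
    _ = 3 ^ (2 * b.t) := by ring

end Sizes

section WeightBounds

include hb

theorem abs_expGoldenRatio_le (k : b.Index) : |(expGoldenRatio k : ℝ)| ≤ 3 ^ b.t := by
  have hi := k.1.2
  have hk := Nat.mul_le_mul_left b.n k.2.2.2.le
  have hn := hb.n_le
  have : |expGoldenRatio k| ≤ 3 ^ b.t := by
    unfold expGoldenRatio
    zify at hi hk hn
    have : 0 ≤ (b.n : ℤ) * (k.2.2 : ℕ) := by positivity
    rw [abs_le]
    constructor <;> linarith [Int.natCast_nonneg (k.1 : ℕ)]
  exact_mod_cast this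

theorem abs_expTribonacci_le (k : b.Index) : |(expTribonacci k : ℝ)| ≤ 3 ^ b.t := by
  have hj := k.2.1.2
  have hk := Nat.mul_le_mul_left b.m k.2.2.2.le
  have hm := hb.m_le
  have : |expTribonacci k| ≤ 3 ^ b.t := by
    unfold expTribonacci
    rw [abs_of_nonneg (by positivity)]
    zify at hj hk hm
    linarith
  exact_mod_cast this

theorem abs_logMonomial_le (k : b.Index) : |logMonomial k| ≤ 3 * b.L := by
  have hi : ((k.1 : ℕ) : ℝ) ≤ b.L := by exact_mod_cast k.1.2.le
  have hj : ((k.2.1 : ℕ) : ℝ) ≤ b.L := by exact_mod_cast k.2.1.2.le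
  have hk : ((k.2.2 : ℕ) : ℝ) ≤ b.L₃ := by exact_mod_cast k.2.2.2.le
  have first : |(k.1 : ℕ) * log φ| ≤ b.L := by
    rw [abs_mul, Nat.abs_cast, abs_of_pos log_goldenRatio_pos]
    nlinarith [log_goldenRatio_pos, log_goldenRatio_le_one]
  have second : |(k.2.1 : ℕ) * log τ| ≤ b.L := by
    rw [abs_mul, Nat.abs_cast, abs_of_pos log_tribonacciConst_pos]
    nlinarith [log_tribonacciConst_pos, log_tribonacciConst_le_one]
  have third : |(k.2.2 : ℕ) * log (b.x / b.y)| ≤ b.L := by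
    rw [abs_mul, Nat.abs_cast]
    calc (k.2.2 : ℕ) * |log (b.x / b.y)| ≤ b.L₃ * b.G := by
          gcongr
          exact hb.abs_log_le
      _ = b.L := by unfold L; push_cast; ring
  unfold logMonomial
  linarith [abs_add_three ((k.1 : ℕ) * log φ) ((k.2.1 : ℕ) * log τ)
    ((k.2.2 : ℕ) * log (b.x / b.y))]

theorem abs_logReducedMonomial_le (hΛ : |b.value| ≤ 1) (k : b.Index) :
    |logReducedMonomial k| ≤ 4 * b.L := by
  have hk : ((k.2.2 : ℕ) : ℝ) ≤ b.L := by exact_mod_cast k.2.2.2.le.trans hb.L₃_le_L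
  have diff : |(k.2.2 : ℕ) * b.value| ≤ b.L := by
    rw [abs_mul, Nat.abs_cast]
    nlinarith [abs_nonneg b.value]
  rw [← sub_sub_cancel (logMonomial k) (logReducedMonomial k), logMonomial_sub_logReducedMonomial]
  linarith [abs_sub (logMonomial k) ((k.2.2 : ℕ) * b.value), hb.abs_logMonomial_le k]

theorem abs_expGoldenRatio_pow_mul_le {μ ν : ℕ} (hμ : μ ≤ b.K) (hν : ν ≤ b.K) (k : b.Index) :
    |(expGoldenRatio k ^ μ * expTribonacci k ^ ν : ℝ)| ≤ 3 ^ (2 * b.K * b.t) := by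
  have one_le : (1 : ℝ) ≤ 3 ^ b.t := one_le_pow₀ (by norm_num)
  rw [abs_mul, abs_pow, abs_pow]
  calc |(expGoldenRatio k : ℝ)| ^ μ * |(expTribonacci k : ℝ)| ^ ν
      ≤ (3 ^ b.t) ^ μ * (3 ^ b.t) ^ ν := by
        gcongr
        · exact hb.abs_expGoldenRatio_le k
        · exact hb.abs_expTribonacci_le k
    _ ≤ (3 ^ b.t) ^ b.K * (3 ^ b.t) ^ b.K := by gcongr
    _ = 3 ^ (2 * b.K * b.t) := by ring

theorem sum_abs_weight_le {p : b.Index → ℤ} (hp : ∀ k, |(p k : ℝ)| ≤ 3 ^ b.coeffExp) {μ ν : ℕ}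
    (hμ : μ ≤ b.K) (hν : ν ≤ b.K) : ∑ k, |(weight p μ ν k : ℝ)| ≤ 3 ^ b.massExp := by
  have term_le (k : b.Index) :
      |(weight p μ ν k : ℝ)| ≤ 3 ^ b.coeffExp * 3 ^ (2 * b.K * b.t) := by
    rw [weight, mul_assoc, Int.cast_mul, abs_mul]
    push_cast
    exact mul_le_mul (hp k) (hb.abs_expGoldenRatio_pow_mul_le hμ hν k) (abs_nonneg _)
      (by positivity)
  calc ∑ k, |(weight p μ ν k : ℝ)|
      ≤ b.numCoeffs * (3 ^ b.coeffExp * 3 ^ (2 * b.K * b.t)) := by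
        refine (Finset.sum_le_card_nsmul _ _ _ fun k _ => term_le k).trans_eq ?_
        rw [card_univ, card_index, nsmul_eq_mul]
    _ ≤ 3 ^ (3 * b.t) * (3 ^ b.coeffExp * 3 ^ (2 * b.K * b.t)) := by
        gcongr
        exact_mod_cast hb.numCoeffs_le_three_pow
    _ = 3 ^ b.massExp := by rw [massExp]; ring

end WeightBounds

section AuxiliaryBounds

variable {p : b.Index → ℤ} (hp : ∀ k, |(p k : ℝ)| ≤ 3 ^ b.coeffExp) {μ ν : ℕ} (hμ : μ ≤ b.K)
  (hν : ν ≤ b.K)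

include hb hp hμ hν

theorem abs_sum_weight_mul_le {g : b.Index → ℝ} {T : ℝ} (hT : 0 ≤ T) (hg : ∀ k, |g k| ≤ T) :
    |∑ k, weight p μ ν k * g k| ≤ 3 ^ b.massExp * T := by
  calc |∑ k, weight p μ ν k * g k| ≤ ∑ k, |(weight p μ ν k : ℝ)| * T := by
        refine (abs_sum_le_sum_abs _ _).trans (Finset.sum_le_sum fun k _ => ?_)
        rw [abs_mul]
        gcongr
        exact hg k
    _ ≤ 3 ^ b.massExp * T := by
        rw [← Finset.sum_mul]
        gcongr
        exact hb.sum_abs_weight_le hp hμ hν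

theorem abs_auxFunction_le (hΛ : |b.value| ≤ 1) {N W : ℕ} {z : ℝ} (hz : 0 ≤ z) (hzW : z ≤ W) :
    |auxFunction p μ ν N z| ≤ 3 ^ (b.massExp + 4 * b.L * W) * (4 * b.L) ^ N := by
  have term_le (k : b.Index) : |logReducedMonomial k ^ N * exp (logReducedMonomial k * z)| ≤
      (4 * b.L) ^ N * 3 ^ (4 * b.L * W) := by
    have hk := hb.abs_logReducedMonomial_le hΛ k
    rw [abs_mul, abs_pow, abs_of_pos (exp_pos _)]
    gcongr
    refine exp_le_three_pow ?_
    push_cast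
    exact mul_le_mul (le_of_abs_le hk) hzW hz (by positivity)
  simp only [auxFunction, mul_assoc] at term_le ⊢
  refine (hb.abs_sum_weight_mul_le hp hμ hν (by positivity) term_le).trans_eq ?_
  rw [pow_add]
  ring

theorem abs_auxFunction_sub_auxValue_le (hΛ : |b.value| ≤ 1) {l W : ℕ} (hl : l ≤ W)
    (hlN : l ≤ b.numCoeffs) :
    |auxFunction p μ ν 0 l - auxValue p μ ν l| ≤
      3 ^ (4 * b.t + b.massExp + 4 * b.L * W) * |b.value| := by
  have term_le (k : b.Index) : |exp (logReducedMonomial k * l) - exp (logMonomial k * l)| ≤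
      3 ^ (4 * b.L * W) * (3 ^ (4 * b.t) * |b.value|) := by
    have hlW : (l : ℝ) ≤ W := by exact_mod_cast hl
    have le_of_le {u : ℝ} (hu : u ≤ 4 * b.L) : u * l ≤ (4 * b.L * W : ℕ) := by
      push_cast
      exact mul_le_mul hu hlW (by positivity) (by positivity)
    refine (abs_exp_sub_exp_le (le_of_le (le_of_abs_le (hb.abs_logReducedMonomial_le hΛ k)))
      (le_of_le (by linarith [le_of_abs_le (hb.abs_logMonomial_le k), (b.L).cast_nonneg (α := ℝ)]))
      ).trans (mul_le_mul (exp_le_three_pow le_rfl) ?_ (abs_nonneg _) (by positivity))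
    rw [← sub_mul, abs_mul, abs_sub_comm, logMonomial_sub_logReducedMonomial, abs_mul,
      Nat.abs_cast, Nat.abs_cast, mul_right_comm]
    gcongr
    calc ((k.2.2 : ℕ) : ℝ) * l ≤ 3 ^ b.t * 3 ^ (3 * b.t) := by
          gcongr
          · exact_mod_cast k.2.2.2.le.trans hb.L₃_le
          · exact_mod_cast hlN.trans hb.numCoeffs_le_three_pow
      _ = 3 ^ (4 * b.t) := by ring
  simp only [auxFunction, auxValue, pow_zero, mul_one, ← Finset.sum_sub_distrib, ← mul_sub]
  refine (hb.abs_sum_weight_mul_le hp hμ hν (by positivity) term_le).trans_eq ?_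
  rw [pow_add, pow_add]
  ring

end AuxiliaryBounds

section Algebraicity

include hb

theorem exp_logMonomial_mul (k : b.Index) (l : ℕ) :
    exp (logMonomial k * l) * b.y ^ ((b.L₃ - 1) * l) =
      φ ^ ((k.1 : ℕ) * l) * τ ^ ((k.2.1 : ℕ) * l) * b.x ^ ((k.2.2 : ℕ) * l) *
        b.y ^ ((b.L₃ - 1 - k.2.2) * l) := by
  have hy := hb.y_pos.ne'
  have split : (b.L₃ - 1) * l = (k.2.2 : ℕ) * l + (b.L₃ - 1 - k.2.2) * l := by
    rw [← add_mul, Nat.add_sub_cancel' (Nat.le_sub_one_of_lt k.2.2.2)]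
  rw [logMonomial, mul_comm (_ + _) (l : ℝ), mul_add, mul_add, exp_add, exp_add, split, pow_add]
  simp only [← mul_assoc (l : ℝ), ← Nat.cast_mul, exp_nat_mul, exp_log goldenRatio_pos,
    exp_log tribonacciConst_pos, exp_log (div_pos hb.x_pos hb.y_pos), mul_comm l, div_pow]
  field_simp

theorem isIntegralMultiplier_exp_logMonomial (k : b.Index) (l : ℕ) :
    IsIntegralMultiplier orderBasis (exp (logMonomial k * l) * b.y ^ ((b.L₃ - 1) * l))
      (3 ^ (3 * b.L * l)) := by
  rw [hb.exp_logMonomial_mul]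
  refine ((((IsIntegralMultiplier.goldenRatio.pow _).mul
    (IsIntegralMultiplier.tribonacciConst.pow _)).mul (hb.x_multiplier.pow _)).mul
    (hb.y_multiplier.pow _)).mono ?_
  rw [← pow_mul, ← pow_mul, ← pow_add, ← pow_add, ← pow_add]
  refine pow_le_pow_right₀ (by norm_num) ?_
  have hi := k.1.2.le
  have hj := k.2.1.2.le
  calc (k.1 : ℕ) * l + (k.2.1 : ℕ) * l + b.G * ((k.2.2 : ℕ) * l) +
        b.G * ((b.L₃ - 1 - k.2.2) * l)
      = (k.1 + k.2.1 + b.G * (k.2.2 + (b.L₃ - 1 - k.2.2))) * l := by ring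
    _ ≤ (b.L + b.L + b.G * b.L₃) * l := by gcongr; omega
    _ = 3 * b.L * l := by rw [← L]; ring

theorem isIntegralMultiplier_auxValue {p : b.Index → ℤ}
    (hp : ∀ k, |(p k : ℝ)| ≤ 3 ^ b.coeffExp) {μ ν : ℕ} (hμ : μ ≤ b.K) (hν : ν ≤ b.K) (l : ℕ) :
    IsIntegralMultiplier orderBasis (auxValue p μ ν l * b.y ^ ((b.L₃ - 1) * l))
      (3 ^ (b.massExp + 3 * b.L * l)) := by
  rw [auxValue, Finset.sum_mul]
  simp only [mul_assoc]
  refine (IsIntegralMultiplier.sum fun k _ => (IsIntegralMultiplier.intCast (weight p μ ν k)).mul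
    (hb.isIntegralMultiplier_exp_logMonomial k l)).mono ?_
  rw [← Finset.sum_mul, pow_add, ← mul_assoc]
  gcongr
  exact hb.sum_abs_weight_le hp hμ hν

theorem exists_coeffs : ∃ p : b.Index → ℤ, p ≠ 0 ∧ (∀ k, |(p k : ℝ)| ≤ 3 ^ b.coeffExp) ∧
    ∀ μ < b.K, ∀ ν < b.K, ∀ l < b.h, auxValue p μ ν l = 0 := by
  have hK : 0 < b.K := Nat.mul_pos (by norm_num) hb.one_le_s
  have hh : 0 < b.h := hb.one_le_h
  have multiplier (e : Fin b.K × Fin b.K × Fin b.h) (k : b.Index) :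
      IsIntegralMultiplier orderBasis
        (expGoldenRatio k ^ (e.1 : ℕ) * expTribonacci k ^ (e.2.1 : ℕ) *
          (exp (logMonomial k * (e.2.2 : ℕ)) * b.y ^ ((b.L₃ - 1) * (e.2.2 : ℕ))))
        (3 ^ (2 * b.K * b.t + 3 * b.L * b.h)) := by
    rw [pow_add]
    have power_le := hb.abs_expGoldenRatio_pow_mul_le e.1.2.le e.2.1.2.le k
    have := e.2.2.2.le
    refine .mono (c := 3 ^ (2 * b.K * b.t) * 3 ^ (3 * b.L * (e.2.2 : ℕ))) (.mul ?_
      (hb.isIntegralMultiplier_exp_logMonomial k e.2.2)) (by gcongr; norm_num)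
    exact_mod_cast (IsIntegralMultiplier.intCast _).mono (by exact_mod_cast power_le)
  obtain ⟨p, hp0, hp, hzero⟩ := exists_small_int_relation orderBasis_ne_zero
    (one_le_pow₀ (by norm_num)) multiplier (by simp [hK, hh])
    (by rw [card_index, numCoeffs_eq]; simp only [Fintype.card_prod, Fintype.card_fin]; ring)
  refine ⟨p, hp0, fun k => (hp k).trans ?_, fun μ hμ ν hν l hl => ?_⟩
  · rw [card_index, coeffExp, add_assoc, pow_add 3 (3 * b.t)]
    gcongr
    exact_mod_cast hb.numCoeffs_le_three_pow
  · refine (mul_eq_zero.1 ?_).resolve_right (pow_ne_zero ((b.L₃ - 1) * l) hb.y_pos.ne')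
    rw [← hzero (⟨μ, hμ⟩, ⟨ν, hν⟩, ⟨l, hl⟩), auxValue, Finset.sum_mul]
    refine Finset.sum_congr rfl fun k _ => ?_
    simp only [weight, Int.cast_mul, Int.cast_pow, mul_assoc]

theorem one_le_abs_auxValue_mul {p : b.Index → ℤ} (hp : ∀ k, |(p k : ℝ)| ≤ 3 ^ b.coeffExp)
    {μ ν : ℕ} (hμ : μ ≤ b.K) (hν : ν ≤ b.K) {l W : ℕ} (hl : l ≤ W) (hA : auxValue p μ ν l ≠ 0) :
    1 ≤ |auxValue p μ ν l| * 3 ^ b.liouvilleExp W := by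
  have multiplier := (hb.isIntegralMultiplier_auxValue hp hμ hν l).mono
    (d := 3 ^ (b.massExp + 3 * b.L * W)) (by gcongr; norm_num)
  have y_le : |b.y ^ ((b.L₃ - 1) * l)| ≤ 3 ^ (b.L * W) := by
    rw [abs_pow]
    calc |b.y| ^ ((b.L₃ - 1) * l) ≤ (3 ^ b.G) ^ ((b.L₃ - 1) * l) := by
          gcongr
          exact hb.y_multiplier.abs_le orderBasis_ne_zero
      _ = 3 ^ (b.G * (b.L₃ - 1) * l) := by rw [← pow_mul, mul_assoc]
      _ ≤ 3 ^ (b.L * W) := by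
          unfold L
          gcongr
          · norm_num
          · omega
  calc 1 ≤ |auxValue p μ ν l * b.y ^ ((b.L₃ - 1) * l)| *
        (12000 * (3 ^ (b.massExp + 3 * b.L * W)) ^ 6) :=
        multiplier.one_le_abs_mul (mul_ne_zero hA (pow_ne_zero _ hb.y_pos.ne'))
          (one_le_pow₀ (by norm_num))
    _ ≤ |auxValue p μ ν l| * 3 ^ (b.L * W) * (3 ^ 9 * (3 ^ (b.massExp + 3 * b.L * W)) ^ 6) := by
        rw [abs_mul]
        gcongr
        norm_num
    _ = |auxValue p μ ν l| * 3 ^ b.liouvilleExp W := by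
        rw [liouvilleExp, pow_add _ _ (b.L * W), pow_add _ 9, mul_comm 6, pow_mul _ _ 6]
        ring

end Algebraicity

section Exponents

variable {H : ℕ} (hH : b.h ≤ H)

include hb hH

theorem liouvilleExp_add_le :
    b.liouvilleExp (b.r * H) + (b.massExp + 4 * b.L * (b.r * H)) + 1 ≤ 2 * (b.s * H) := by
  have hLr : b.L * b.h ≤ b.L * (b.r * H) :=
    Nat.mul_le_mul_left _ (hH.trans (Nat.le_mul_of_pos_left _ hb.one_le_r))
  have ht : 756 * b.t ≤ b.L * (b.r * H) := (Nat.le_mul_of_pos_left _ hb.one_le_L).trans hLr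
  have hKt : 28 * (b.K * b.t) ≤ 100 * (b.L * (b.r * H)) := by
    calc 28 * (b.K * b.t) = 100 * (b.L * (b.r * b.h)) := by unfold K s h; ring
      _ ≤ 100 * (b.L * (b.r * H)) := by gcongr
  have hsH : b.s * H = 100 * (b.L * (b.r * H)) := by unfold s; ring
  have := hb.one_le_t
  rw [hsH]
  unfold liouvilleExp massExp coeffExp
  nlinarith

theorem exponent_le_bakerExp (hHN : H ≤ b.numCoeffs) :
    b.s + (4 * b.t + b.massExp + 4 * b.L * (b.r * H)) + (5 * b.t + 2) * (b.s * H) + 1 +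
      b.liouvilleExp (b.r * H) + 1 ≤ b.bakerExp := by
  have exponents := hb.liouvilleExp_add_le hH
  have hs : b.s ≤ b.s * H := Nat.le_mul_of_pos_right _ (hb.one_le_h.trans hH)
  have ht : 756 * b.t ≤ b.s * H := hH.trans (Nat.le_mul_of_pos_left _ hb.one_le_s)
  have hE : 14 * b.t * (b.s * H) ≤ b.bakerExp := by
    calc 14 * b.t * (b.s * H) = 1400 * b.t * b.r * b.L * H := by unfold s; ring
      _ ≤ 1400 * b.t * b.r * b.L * b.numCoeffs := by gcongr
      _ = b.bakerExp := by unfold bakerExp numCoeffs; ring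
  have := hb.one_le_t
  nlinarith [Nat.le_mul_of_pos_left (b.s * H) hb.one_le_t]

theorem main_term_mul_le {H' : ℕ} (hH' : H' ≤ b.r * H) :
    (3 : ℝ) ^ (b.massExp + 4 * b.L * (b.r * H)) * (4 * b.L) ^ (b.s * H) *
      ((H' : ℝ) ^ (b.s * H) / (b.s * H).factorial) * 3 ^ b.liouvilleExp (b.r * H) ≤ 1 / 3 := by
  have exponents := hb.liouvilleExp_add_le hH
  have base_le : 25 * (4 * b.L * H' : ℝ) ≤ (b.s * H : ℕ) := by
    calc 25 * (4 * b.L * H' : ℝ) ≤ 25 * (4 * b.L * (b.r * H : ℕ)) := by gcongr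
      _ = (b.s * H : ℕ) := by unfold s; push_cast; ring
  generalize b.s * H = N at *
  generalize b.liouvilleExp (b.r * H) = Q at *
  generalize b.massExp + 4 * b.L * (b.r * H) = M at *
  calc (3 : ℝ) ^ M * (4 * b.L) ^ N * ((H' : ℝ) ^ N / N.factorial) * 3 ^ Q
      = 3 ^ (Q + M) * ((4 * b.L * H') ^ N / N.factorial) := by rw [mul_pow, pow_add]; ring
    _ ≤ 3 ^ (Q + M) * 9⁻¹ ^ N := by
        gcongr
        exact pow_div_factorial_le_inv_nine_pow (by positivity) base_le
    _ = 3 ^ (Q + M + 1) * 9⁻¹ ^ N * (1 / 3) := by rw [pow_succ]; ring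
    _ ≤ 3 ^ (2 * N) * 9⁻¹ ^ N * (1 / 3) := by gcongr; norm_num
    _ = 1 / 3 := by rw [pow_mul, ← mul_pow]; norm_num

theorem error_term_mul_le (hΛ : |b.value| * 3 ^ b.bakerExp < 1) {H' : ℕ} (hHH' : H ≤ H')
    (hH' : H' ≤ b.numCoeffs) :
    (3 ^ (b.s + (4 * b.t + b.massExp + 4 * b.L * (b.r * H))) * |b.value| *
        (2 * H' * (b.s + 1)) ^ (b.s * H) +
      3 ^ (4 * b.t + b.massExp + 4 * b.L * (b.r * H)) * |b.value|) *
        3 ^ b.liouvilleExp (b.r * H) ≤ 1 / 3 := by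
  have exponents := hb.exponent_le_bakerExp hH (hHH'.trans hH')
  have base_le : 2 * (H' : ℝ) * (b.s + 1) ≤ 3 ^ (5 * b.t + 2) := by
    have hN : (H' : ℝ) ≤ 3 ^ (3 * b.t) := by exact_mod_cast hH'.trans hb.numCoeffs_le_three_pow
    have hs : (b.s : ℝ) ≤ 3 ^ (2 * b.t) := by exact_mod_cast hb.s_le
    calc 2 * (H' : ℝ) * (b.s + 1) ≤ 2 * 3 ^ (3 * b.t) * (3 ^ (2 * b.t) + 3 ^ (2 * b.t)) := by
          gcongr
          exact one_le_pow₀ (by norm_num)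
      _ = 4 * 3 ^ (5 * b.t) := by rw [show 5 * b.t = 3 * b.t + 2 * b.t by ring, pow_add]; ring
      _ ≤ 9 * 3 ^ (5 * b.t) := by gcongr; norm_num
      _ = 3 ^ (5 * b.t + 2) := by ring
  generalize 4 * b.t + b.massExp + 4 * b.L * (b.r * H) = e at *
  generalize b.s * H = N at *
  generalize b.liouvilleExp (b.r * H) = Q at *
  calc _ ≤ (3 ^ (b.s + e) * |b.value| * (3 ^ (5 * b.t + 2)) ^ N +
        3 ^ (b.s + e + (5 * b.t + 2) * N) * |b.value|) * 3 ^ Q := by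
        gcongr
        · norm_num
        · omega
    _ = 2 * (3 ^ (b.s + e + (5 * b.t + 2) * N + Q) * |b.value|) := by
        rw [← pow_mul, pow_add 3 _ Q, pow_add 3 (b.s + e)]
        ring
    _ ≤ 3 * (3 ^ (b.s + e + (5 * b.t + 2) * N + Q) * |b.value|) := by gcongr; norm_num
    _ = 3 ^ (b.s + e + (5 * b.t + 2) * N + 1 + Q + 1) * |b.value| * (1 / 3) := by ring
    _ ≤ 3 ^ b.bakerExp * |b.value| * (1 / 3) := by gcongr; norm_num
    _ ≤ 1 / 3 := by linarith

end Exponents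

section Extrapolation

variable {p : b.Index → ℤ} (hp : ∀ k, |(p k : ℝ)| ≤ 3 ^ b.coeffExp)

include hb hp

theorem abs_auxFunction_le_of_zeros (hΛ : |b.value| ≤ 1) {μ ν i l W : ℕ} (hi : i ≤ b.s)
    (hμ : μ + i ≤ b.K) (hν : ν + i ≤ b.K) (hl : l ≤ W) (hlN : l ≤ b.numCoeffs)
    (hzero : ∀ j ≤ i, auxValue p (μ + j) (ν + (i - j)) l = 0) :
    |auxFunction p μ ν i l| ≤
      3 ^ (b.s + (4 * b.t + b.massExp + 4 * b.L * W)) * |b.value| := by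
  rw [auxFunction_eq_sum_choose]
  set B := 3 ^ (4 * b.t + b.massExp + 4 * b.L * W) * |b.value| with hB
  have term_le : ∀ j ∈ range (i + 1), |i.choose j * log φ ^ j * log τ ^ (i - j) *
      auxFunction p (μ + j) (ν + (i - j)) 0 l| ≤ i.choose j * B := by
    intro j hj
    have hj : j ≤ i := Nat.lt_succ_iff.1 (mem_range.1 hj)
    have value_le := hb.abs_auxFunction_sub_auxValue_le hp (μ := μ + j) (ν := ν + (i - j))
      (by omega) (by omega) hΛ hl hlN
    rw [hzero j hj, sub_zero] at value_le
    have hφ : |log φ| ≤ 1 := (abs_of_pos log_goldenRatio_pos).trans_le log_goldenRatio_le_one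
    have hτ : |log τ| ≤ 1 :=
      (abs_of_pos log_tribonacciConst_pos).trans_le log_tribonacciConst_le_one
    rw [abs_mul, abs_mul, abs_mul, Nat.abs_cast, abs_pow, abs_pow]
    calc _ ≤ i.choose j * 1 * 1 * B := by
          gcongr
          · exact pow_le_one₀ (abs_nonneg _) hφ
          · exact pow_le_one₀ (abs_nonneg _) hτ
      _ = i.choose j * B := by ring
  refine (abs_sum_le_sum_abs _ _).trans ((Finset.sum_le_sum term_le).trans ?_)
  rw [← Finset.sum_mul, ← Nat.cast_sum, Nat.sum_range_choose, pow_add, mul_assoc, ← hB]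
  gcongr
  calc ((2 ^ i : ℕ) : ℝ) ≤ (3 : ℝ) ^ i := by push_cast; gcongr; norm_num
    _ ≤ 3 ^ b.s := by gcongr; norm_num

theorem abs_auxFunction_le_of_forall_zeros (hΛ : |b.value| ≤ 1) {k H H' : ℕ} (hk : k + b.s ≤ b.K)
    (hH : b.h ≤ H) (hHH' : H ≤ H') (hH' : H' ≤ b.r * H) (hHN : H' ≤ b.numCoeffs)
    (hzero : ∀ μ < k + b.s, ∀ ν < k + b.s, ∀ l < H, auxValue p μ ν l = 0)
    {μ ν l : ℕ} (hμ : μ < k) (hν : ν < k) (hl : l < H') :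
    |auxFunction p μ ν 0 l| ≤
      3 ^ (b.massExp + 4 * b.L * (b.r * H)) * (4 * b.L) ^ (b.s * H) *
        ((H' : ℝ) ^ (b.s * H) / (b.s * H).factorial) +
      3 ^ (b.s + (4 * b.t + b.massExp + 4 * b.L * (b.r * H))) * |b.value| *
        (2 * H' * (b.s + 1)) ^ (b.s * H) := by
  have cast_injOn : Set.InjOn (Nat.cast : ℕ → ℝ) (range H) := Nat.cast_injective.injOn
  refine (isJet_auxFunction p μ ν).abs_le_of_small_at_nodes (convex_Icc (0 : ℝ) H')
    (s := (range H).image (Nat.cast : ℕ → ℝ)) (c := fun _ => b.s) ?_ ?_ ?_ ?_ (fun _ _ => le_rfl)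
    ?_ ?_ (by positivity) ?_ ⟨l.cast_nonneg, by exact_mod_cast hl.le⟩
  · exact_mod_cast hb.one_le_h.trans (hH.trans hHH')
  · intro x hx y hy
    simpa using abs_sub_le_of_le_of_le hx.1 hx.2 hy.1 hy.2
  · simp only [mem_image, mem_range]
    rintro _ ⟨i, hi, rfl⟩
    exact ⟨i.cast_nonneg, by exact_mod_cast hi.le.trans hHH'⟩
  · simp only [coe_image, Set.Pairwise, Set.forall_mem_image]
    intro i _ j _ hij
    exact_mod_cast Int.one_le_abs (sub_ne_zero.2 (Nat.cast_injective.ne fun h => hij (by rw [h])))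
  · rw [sum_const, card_image_of_injOn cast_injOn, card_range, smul_eq_mul, mul_comm]
  · intro x hx
    exact hb.abs_auxFunction_le hp (by omega) (by omega) hΛ hx.1
      (hx.2.trans (by exact_mod_cast hH'))
  · simp only [mem_image, mem_range]
    rintro _ ⟨l₀, hl₀, rfl⟩ i hi
    refine (hb.abs_auxFunction_le_of_zeros hp hΛ hi.le (by omega) (by omega)
      (hl₀.le.trans (hHH'.trans hH')) (hl₀.le.trans (hHH'.trans hHN))
      fun j hj => hzero _ (by omega) _ (by omega) _ hl₀).trans ?_
    exact le_mul_of_one_le_right (by positivity) (by exact_mod_cast i.factorial_pos)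

theorem auxValue_eq_zero_of_extrapolation (hΛ : |b.value| * 3 ^ b.bakerExp < 1) {k H H' : ℕ}
    (hk : k + b.s ≤ b.K) (hH : b.h ≤ H) (hHH' : H ≤ H') (hH' : H' ≤ b.r * H)
    (hHN : H' ≤ b.numCoeffs)
    (hzero : ∀ μ < k + b.s, ∀ ν < k + b.s, ∀ l < H, auxValue p μ ν l = 0) :
    ∀ μ < k, ∀ ν < k, ∀ l < H', auxValue p μ ν l = 0 := by
  intro μ hμ ν hν l hl
  by_contra hA
  have hΛ1 : |b.value| ≤ 1 :=
    (le_mul_of_one_le_right (abs_nonneg _) (one_le_pow₀ (by norm_num))).trans hΛ.le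
  have function_le :=
    hb.abs_auxFunction_le_of_forall_zeros hp hΛ1 hk hH hHH' hH' hHN hzero hμ hν hl
  have approx := hb.abs_auxFunction_sub_auxValue_le hp (μ := μ) (ν := ν) (by omega) (by omega) hΛ1
    (hl.le.trans hH') (hl.le.trans hHN)
  have liouville := hb.one_le_abs_auxValue_mul hp (μ := μ) (ν := ν) (by omega) (by omega)
    (hl.le.trans hH') hA
  have main := hb.main_term_mul_le hH hH'
  have error := hb.error_term_mul_le hH hΛ hHH' hHN
  have value_le := (abs_sub_abs_le_abs_sub (auxValue p μ ν l) (auxFunction p μ ν 0 l)).trans_eq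
    (abs_sub_comm _ _)
  set M := (3 : ℝ) ^ b.liouvilleExp (b.r * H)
  have hM : 0 < M := by positivity
  nlinarith

theorem auxValue_eq_zero_of_le (hΛ : |b.value| * 3 ^ b.bakerExp < 1)
    (hzero : ∀ μ < b.K, ∀ ν < b.K, ∀ l < b.h, auxValue p μ ν l = 0) {j : ℕ} (hj : j ≤ 26) :
    ∀ μ < (27 - j) * b.s, ∀ ν < (27 - j) * b.s, ∀ l < min (b.h * b.r ^ j) b.numCoeffs,
      auxValue p μ ν l = 0 := by
  induction j with
  | zero =>
    intro μ hμ ν hν l hl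
    exact hzero μ hμ ν hν l (by simpa using (lt_min_iff.1 hl).1)
  | succ j ih =>
    have split : (27 - j) * b.s = (27 - (j + 1)) * b.s + b.s := by
      rw [show 27 - j = 27 - (j + 1) + 1 by omega, add_one_mul]
    have ih := ih (by omega)
    rw [split] at ih
    have hr := hb.one_le_r
    refine hb.auxValue_eq_zero_of_extrapolation hp hΛ ?_
      (le_min (Nat.le_mul_of_pos_right _ (Nat.pow_pos hr)) hb.h_le_numCoeffs) ?_ ?_
      (min_le_right _ _) ih
    · rw [← split]
      exact Nat.mul_le_mul_right _ (Nat.sub_le _ _)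
    · exact min_le_min (Nat.mul_le_mul_left _ (Nat.pow_le_pow_right hr j.le_succ)) le_rfl
    · rw [← Nat.mul_min_mul_left]
      exact min_le_min (le_of_eq (by ring)) (Nat.le_mul_of_pos_left _ hr)

end Extrapolation

section Nonvanishing

include hb

theorem eq_of_expGoldenRatio_eq {k k' : b.Index} (h : logMonomial k = logMonomial k')
    (hq : expGoldenRatio k = expGoldenRatio k') : k = k' := by
  refine eq_of_logMonomial_eq h (Fin.ext (le_antisymm ?_ ?_)) <;>
  · by_contra! hlt
    have := Nat.mul_le_mul_left b.n (Nat.succ_le_of_lt hlt)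
    rw [Nat.succ_eq_add_one, mul_add_one] at this
    have := k.1.2
    have := k'.1.2
    have := hb.L_le_n
    unfold expGoldenRatio at hq
    zify at *
    omega

theorem eq_zero_of_auxValue_eq_zero {p : b.Index → ℤ}
    (hzero : ∀ μ < b.s, ∀ l < b.numCoeffs, auxValue p μ 0 l = 0) : p = 0 := by
  classical
  funext k₀
  set S : Finset b.Index := {k | exp (logMonomial k) = exp (logMonomial k₀)} with hS
  have mem_S {k : b.Index} (hk : k ∈ S) : logMonomial k = logMonomial k₀ := by simpa [hS] using hk
  have card_S_le : S.card ≤ b.s := by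
    have : S.card ≤ b.L₃ := by
      simpa using Finset.card_le_card_of_injOn (t := (univ : Finset (Fin b.L₃))) (fun k => k.2.2)
        (by simp) fun k hk k' hk' h₃ =>
          eq_of_logMonomial_eq ((mem_S hk).trans (mem_S hk').symm) h₃
    have := hb.L₃_le_L
    have := hb.one_le_r
    unfold s
    nlinarith
  have fiber_sum : ∀ μ < S.card, ∑ k ∈ S, (p k : ℝ) * (expGoldenRatio k : ℝ) ^ μ = 0 := by
    intro μ hμ
    refine sum_fiber_eq_zero_of_power_sums (S := univ) (fun l hl => ?_)
      (mem_image_of_mem (fun k => exp (logMonomial k)) (mem_univ k₀))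
    rw [card_univ, card_index] at hl
    rw [← hzero μ (hμ.trans_le card_S_le) l hl, auxValue]
    refine Finset.sum_congr rfl fun k _ => ?_
    rw [mul_comm (logMonomial k), exp_nat_mul]
    simp only [weight, pow_zero, mul_one, Int.cast_mul, Int.cast_pow, mul_assoc]
  have singleton : S.filter (fun k => (expGoldenRatio k : ℝ) = expGoldenRatio k₀) = {k₀} := by
    ext k
    simp only [mem_filter, mem_singleton, Int.cast_inj]
    exact ⟨fun hk => hb.eq_of_expGoldenRatio_eq (mem_S hk.1) hk.2, by rintro rfl; simp [hS]⟩
  have := sum_fiber_eq_zero_of_power_sums fiber_sum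
    (mem_image_of_mem (fun k => (expGoldenRatio k : ℝ)) (by simp [hS] : k₀ ∈ S))
  rw [singleton] at this
  simpa using this

theorem one_le_abs_value_mul : 1 ≤ |b.value| * 3 ^ b.bakerExp := by
  by_contra! hΛ
  obtain ⟨p, hp0, hp, hzero⟩ := hb.exists_coeffs
  have extrapolated := hb.auxValue_eq_zero_of_le hp hΛ hzero le_rfl
  rw [min_eq_right hb.numCoeffs_le] at extrapolated
  exact hp0 (hb.eq_zero_of_auxValue_eq_zero fun μ hμ l hl =>
    extrapolated μ (by omega) 0 (by omega) l hl)

end Nonvanishing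

end Admissible

section Instances

variable {n m t G w : ℕ} {x y : ℝ}

theorem L₃_mk : (mk n m t G (31 * w) x y).L₃ = 63555619680000 * t * w ^ 2 := by
  change 12 * (756 * t) * 27 ^ 2 * 100 ^ 2 * (31 * w) ^ 2 = _
  ring

theorem L_mk : (mk n m t G (31 * w) x y).L = G * (63555619680000 * t * w ^ 2) :=
  congrArg (G * ·) L₃_mk

theorem L_add_mul_L₃_mk_le (hG : 1 ≤ G) (k : ℕ) :
    (mk n m t G (31 * w) x y).L + k * (mk n m t G (31 * w) x y).L₃ ≤
      64 * 10 ^ 12 * G * t * w ^ 2 * (k + 1) := by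
  rw [L_mk, L₃_mk]
  calc G * (63555619680000 * t * w ^ 2) + k * (63555619680000 * t * w ^ 2)
      ≤ G * (64 * 10 ^ 12 * t * w ^ 2) + G * k * (64 * 10 ^ 12 * t * w ^ 2) := by
        gcongr
        · norm_num
        · exact Nat.le_mul_of_pos_left _ hG
        · norm_num
    _ = 64 * 10 ^ 12 * G * t * w ^ 2 * (k + 1) := by ring

theorem admissible_mk (ht : 1 ≤ t) (hG : 1 ≤ G) (hw : 1 ≤ w) (hx0 : 0 < x) (hy0 : 0 < y)
    (hx : IsIntegralMultiplier orderBasis x (3 ^ G))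
    (hy : IsIntegralMultiplier orderBasis y (3 ^ G)) (hlog : |log (x / y)| ≤ G)
    (hGt : G * t ≤ w ^ 10) (hn : 64 * 10 ^ 12 * G * t * w ^ 2 * (n + 1) ≤ 3 ^ t)
    (hm : 64 * 10 ^ 12 * G * t * w ^ 2 * (m + 1) ≤ 3 ^ t)
    (hLn : 64 * 10 ^ 12 * G * t * w ^ 2 ≤ n) : (mk n m t G (31 * w) x y).Admissible where
  one_le_t := ht
  one_le_G := hG
  one_le_r := by change 1 ≤ 31 * w; omega
  x_pos := hx0
  y_pos := hy0
  x_multiplier := hx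
  y_multiplier := hy
  abs_log_le := hlog
  n_le := (L_add_mul_L₃_mk_le hG n).trans hn
  m_le := (L_add_mul_L₃_mk_le hG m).trans hm
  L_le_n := by simpa using (L_add_mul_L₃_mk_le hG 0).trans (by simpa using hLn)
  numCoeffs_le := by
    change _ * _ * _ ≤ 756 * t * (31 * w) ^ 26
    rw [L_mk, L₃_mk]
    calc _ = (G * t) ^ 2 * (63555619680000 ^ 3 * t * w ^ 6) := by ring
      _ ≤ (w ^ 10) ^ 2 * (756 * 31 ^ 26 * t * w ^ 6) := by gcongr; norm_num
      _ = 756 * t * (31 * w) ^ 26 := by ring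

theorem bakerExp_mk_le :
    (mk n m t G (31 * w) x y).bakerExp ≤ 723 * 10 ^ 57 * G ^ 3 * t ^ 5 * w ^ 9 := by
  change 1400 * t * (31 * w) * _ ^ 3 * _ ≤ _
  rw [L_mk, L₃_mk]
  calc _ = 1400 * 31 * 63555619680000 ^ 4 * (G ^ 3 * t ^ 5 * w ^ 9) := by ring
    _ ≤ 723 * 10 ^ 57 * (G ^ 3 * t ^ 5 * w ^ 9) := Nat.mul_le_mul_right _ (by norm_num)
    _ = 723 * 10 ^ 57 * G ^ 3 * t ^ 5 * w ^ 9 := by ring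

end Instances

end LinearForm

theorem one_le_abs_linearForm_mul {n m t G w : ℕ} {x y : ℝ} (ht : 1 ≤ t) (hG : 1 ≤ G)
    (hw : 1 ≤ w) (hx0 : 0 < x) (hy0 : 0 < y) (hx : IsIntegralMultiplier orderBasis x (3 ^ G))
    (hy : IsIntegralMultiplier orderBasis y (3 ^ G)) (hlog : |log (x / y)| ≤ G)
    (hGt : G * t ≤ w ^ 10) (hn : 64 * 10 ^ 12 * G * t * w ^ 2 * (n + 1) ≤ 3 ^ t)
    (hm : 64 * 10 ^ 12 * G * t * w ^ 2 * (m + 1) ≤ 3 ^ t)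
    (hLn : 64 * 10 ^ 12 * G * t * w ^ 2 ≤ n) :
    1 ≤ |n * log φ - m * log τ + log (x / y)| * 3 ^ (723 * 10 ^ 57 * G ^ 3 * t ^ 5 * w ^ 9) := by
  have hb := LinearForm.admissible_mk ht hG hw hx0 hy0 hx hy hlog hGt hn hm hLn
  refine hb.one_le_abs_value_mul.trans (mul_le_mul_of_nonneg_left ?_ (abs_nonneg _))
  exact pow_le_pow_right₀ (by norm_num) LinearForm.bakerExp_mk_le

end Baker

section Binet

open Real
open scoped goldenRatio

local notation "τ" => tribonacciConst

/-- The derivative of `X³ - X² - X - 1` at `τ`, which is the denominator of the dominant term in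
the Binet formula for the Tribonacci numbers. -/
noncomputable def tribonacciDeriv : ℝ := 3 * τ ^ 2 - 2 * τ - 1

/-- The dominant term in the Binet formula for `F n`. -/
noncomputable def goldenTerm (n : ℕ) : ℝ := φ ^ n / √5

/-- The dominant term in the Binet formula for `T m`. -/
noncomputable def tribonacciTerm (m : ℕ) : ℝ := τ ^ (m + 1) / tribonacciDeriv

/-- The factor `1 - x⁻ᵈ` by which `x ^ n` has to be multiplied to give `x ^ n - x ^ (n - d)`.
The index `d = 0` stands for an absent second power, so the factor is then `1` and not `0`. -/
noncomputable def cofactor (x : ℝ) (d : ℕ) : ℝ := if d = 0 then 1 else 1 - x⁻¹ ^ d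

/-- The logarithm of the ratio of the dominant terms of `F n - F (n - i)` and `T m - T (m - j)`,
where `F (n - i)` is dropped if `i = 0` and `T (m - j)` is dropped if `j = 0`. -/
noncomputable def logGap (n m i j : ℕ) : ℝ :=
  log (goldenTerm n * cofactor φ i / (tribonacciTerm m * cofactor τ j))

theorem sqrt_five_eq : √5 = 2 * φ - 1 := by
  rw [goldenRatio]
  ring

theorem sqrt_five_gt : 2.236 < √5 := by linarith [sqrt_five_eq, goldenRatio_gt]

theorem sqrt_five_lt : √5 < 2.2362 := by linarith [sqrt_five_eq, goldenRatio_lt]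

theorem tribonacciDeriv_gt : 5.46 < tribonacciDeriv := by
  unfold tribonacciDeriv
  nlinarith [tribonacciConst_gt]

theorem tribonacciDeriv_lt : tribonacciDeriv < 5.48 := by
  unfold tribonacciDeriv
  nlinarith [tribonacciConst_gt, tribonacciConst_lt]

theorem tribonacciDeriv_pos : 0 < tribonacciDeriv := by linarith [tribonacciDeriv_gt]

theorem goldenRatio_inv_lt : φ⁻¹ < 0.6181 := by
  rw [inv_lt_comm₀ goldenRatio_pos (by norm_num)]
  exact lt_trans (by norm_num) goldenRatio_gt

theorem tribonacciConst_inv_lt : τ⁻¹ < 0.544 := by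
  rw [inv_lt_comm₀ tribonacciConst_pos (by norm_num)]
  exact lt_trans (by norm_num) tribonacciConst_gt

theorem tribonacciConst_inv_gt : 0.543 < τ⁻¹ := by
  rw [lt_inv_comm₀ (by norm_num) tribonacciConst_pos]
  exact tribonacciConst_lt.trans (by norm_num)

theorem cofactor_le_one {x : ℝ} (hx : 0 ≤ x) (d : ℕ) : cofactor x d ≤ 1 := by
  unfold cofactor
  split_ifs
  · rfl
  · linarith [pow_nonneg (inv_nonneg.2 hx) d]

theorem one_sub_inv_le_cofactor {x : ℝ} (hx : 1 ≤ x) (d : ℕ) : 1 - x⁻¹ ≤ cofactor x d := by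
  unfold cofactor
  have := inv_nonneg.2 (zero_le_one.trans hx)
  split_ifs with hd
  · linarith
  · linarith [pow_le_of_le_one this (inv_le_one_of_one_le₀ hx) hd]

theorem cofactor_goldenRatio_le_one (d : ℕ) : cofactor φ d ≤ 1 :=
  cofactor_le_one goldenRatio_pos.le d

theorem cofactor_tribonacciConst_le_one (d : ℕ) : cofactor τ d ≤ 1 :=
  cofactor_le_one tribonacciConst_pos.le d

theorem cofactor_goldenRatio_gt (d : ℕ) : 0.38 < cofactor φ d := by
  linarith [one_sub_inv_le_cofactor one_lt_goldenRatio.le d, goldenRatio_inv_lt]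

theorem cofactor_tribonacciConst_gt (d : ℕ) : 0.45 < cofactor τ d := by
  have := tribonacciConst_gt
  linarith [one_sub_inv_le_cofactor (by linarith : 1 ≤ τ) d, tribonacciConst_inv_lt]

theorem pow_add_mul_inv_pow {x : ℝ} (hx : x ≠ 0) (n d : ℕ) : x ^ (n + d) * x⁻¹ ^ d = x ^ n := by
  rw [pow_add, mul_assoc, ← mul_pow, mul_inv_cancel₀ hx, one_pow, mul_one]

theorem pow_mul_cofactor {x : ℝ} (hx : x ≠ 0) (n : ℕ) {d : ℕ} (hd : 1 ≤ d) :
    x ^ (n + d) * cofactor x d = x ^ (n + d) - x ^ n := by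
  rw [cofactor, if_neg (by omega), mul_sub, mul_one, pow_add_mul_inv_pow hx]

theorem abs_cofactor_zero_sub (x : ℝ) (hx : 0 ≤ x) {d : ℕ} (hd : 1 ≤ d) :
    |cofactor x 0 - cofactor x d| = x⁻¹ ^ d := by
  rw [cofactor, if_pos rfl, cofactor, if_neg (by omega), sub_sub_cancel,
    abs_of_nonneg (pow_nonneg (inv_nonneg.2 hx) d)]

theorem goldenTerm_mul_cofactor (n : ℕ) {d : ℕ} (hd : 1 ≤ d) :
    goldenTerm (n + d) * cofactor φ d = goldenTerm (n + d) - goldenTerm n := by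
  rw [goldenTerm, div_mul_eq_mul_div, pow_mul_cofactor goldenRatio_ne_zero n hd, sub_div]
  rfl

theorem tribonacciTerm_mul_cofactor (m : ℕ) {e : ℕ} (he : 1 ≤ e) :
    tribonacciTerm (m + e) * cofactor τ e = tribonacciTerm (m + e) - tribonacciTerm m := by
  rw [tribonacciTerm, div_mul_eq_mul_div, add_right_comm,
    pow_mul_cofactor tribonacciConst_pos.ne' _ he, sub_div]
  rfl

theorem goldenTerm_pos (n : ℕ) : 0 < goldenTerm n :=
  div_pos (pow_pos goldenRatio_pos n) (by positivity)

theorem tribonacciTerm_pos (m : ℕ) : 0 < tribonacciTerm m :=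
  div_pos (pow_pos tribonacciConst_pos _) tribonacciDeriv_pos

theorem abs_fib_sub_goldenTerm_le (n : ℕ) : |(Nat.fib n : ℝ) - goldenTerm n| ≤ 0.5 := by
  have conj_pow : |ψ ^ n| ≤ 1 := by
    rw [abs_pow]
    refine pow_le_one₀ (abs_nonneg _) (abs_le.2 ⟨?_, ?_⟩) <;>
      linarith [neg_one_lt_goldenConj, goldenConj_neg]
  rw [coe_fib_eq, goldenTerm, sub_div, sub_sub_cancel_left, abs_neg, abs_div,
    abs_of_pos (by positivity : 0 < √5), div_le_iff₀ (by positivity)]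
  linarith [sqrt_five_gt]

/-- The contribution to `T m` of the two complex roots of `X³ - X² - X - 1`. -/
noncomputable def tribError (m : ℕ) : ℝ := trib m - tribonacciTerm m

/-- Dividing `X³ - X² - X - 1` by `X - τ` leaves `X² + (τ - 1)X + τ⁻¹`. -/
theorem trib_quadratic (m : ℕ) :
    (trib (m + 2) : ℝ) + (τ - 1) * trib (m + 1) + τ⁻¹ * trib m = τ ^ (m + 1) := by
  induction m with
  | zero => simp [trib]
  | succ m ih =>
    have recurrence : (trib (m + 3) : ℝ) = trib (m + 2) + trib (m + 1) + trib m := by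
      rw [trib]
      push_cast
      rfl
    rw [pow_succ, ← ih, tribonacciConst_inv_eq, add_right_comm m 1 2, recurrence]
    linear_combination -(trib m : ℝ) * tribonacciConst_cube

theorem tribError_recurrence (m : ℕ) :
    tribError (m + 2) = -(τ - 1) * tribError (m + 1) - τ⁻¹ * tribError m := by
  have dominant : tribonacciTerm (m + 2) + (τ - 1) * tribonacciTerm (m + 1) +
      τ⁻¹ * tribonacciTerm m = τ ^ (m + 1) := by
    have := tribonacciDeriv_pos.ne'
    simp only [tribonacciTerm, tribonacciConst_inv_eq]
    field_simp
    rw [tribonacciDeriv]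
    ring
  unfold tribError
  linarith [trib_quadratic m]

/-- The quadratic form is the squared modulus of `tribError (m + 1) - β * tribError m` for a
complex root `β`; it is multiplied by `|β|² = τ⁻¹` when `m` grows by one. -/
theorem tribError_quadraticForm_le (m : ℕ) :
    tribError (m + 1) ^ 2 + (τ - 1) * tribError (m + 1) * tribError m + τ⁻¹ * tribError m ^ 2 ≤
      0.3 := by
  have := tribonacciConst_gt
  have := tribonacciConst_lt
  have := tribonacciConst_inv_lt
  have := tribonacciConst_inv_gt
  induction m with
  | zero =>
    have := tribonacciDeriv_gt
    have := tribonacciDeriv_lt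
    have zero_eq : tribError 0 = -(τ / tribonacciDeriv) := by simp [tribError, tribonacciTerm, trib]
    have one_eq : tribError 1 = 1 - τ ^ 2 / tribonacciDeriv := by
      simp [tribError, tribonacciTerm, trib]
    have zero_term_le : τ / tribonacciDeriv ≤ 0.34 := by
      rw [div_le_iff₀ (by linarith)]
      linarith
    have zero_term_nonneg : 0 ≤ τ / tribonacciDeriv := div_nonneg (by linarith) (by linarith)
    have one_term_le : τ ^ 2 / tribonacciDeriv ≤ 1 := by
      rw [div_le_iff₀ (by linarith)]
      nlinarith
    have le_one_term : 0.6 ≤ τ ^ 2 / tribonacciDeriv := by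
      rw [le_div_iff₀ (by linarith)]
      nlinarith
    have mixed : 0 ≤ (τ - 1) * tribError 1 * (τ / tribonacciDeriv) :=
      mul_nonneg (mul_nonneg (by linarith) (by linarith)) zero_term_nonneg
    have zero_sq : τ⁻¹ * (τ / tribonacciDeriv) ^ 2 ≤ 0.544 * 0.34 ^ 2 := by gcongr
    have one_sq : tribError 1 ^ 2 ≤ 0.4 ^ 2 := pow_le_pow_left₀ (by linarith) (by linarith) 2
    rw [zero_add, zero_eq, neg_sq]
    linarith
  | succ m ih =>
    calc _ = τ⁻¹ * (tribError (m + 1) ^ 2 + (τ - 1) * tribError (m + 1) * tribError m +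
            τ⁻¹ * tribError m ^ 2) := by rw [tribError_recurrence m]; ring
      _ ≤ 0.3 := by nlinarith

theorem abs_trib_sub_tribonacciTerm_le (m : ℕ) : |(trib m : ℝ) - tribonacciTerm m| ≤ 1 := by
  change |tribError m| ≤ 1
  have := tribonacciConst_gt
  have := tribonacciConst_lt
  have := tribonacciConst_inv_gt
  have discriminant : 0.36 ≤ τ⁻¹ - (τ - 1) ^ 2 / 4 := by nlinarith
  have complete_square : (τ⁻¹ - (τ - 1) ^ 2 / 4) * tribError m ^ 2 ≤ 0.3 := by
    linarith [tribError_quadraticForm_le m,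
      sq_nonneg (tribError (m + 1) + (τ - 1) / 2 * tribError m)]
  refine abs_le_of_sq_le_sq (?_ : _ ≤ (1 : ℝ) ^ 2) zero_le_one
  nlinarith [sq_nonneg (tribError m)]

theorem abs_log_div_le {x y c : ℝ} (hc : 0 < c) (hx : c ≤ x) (hy : c ≤ y) :
    |log (x / y)| ≤ |x - y| / c := by
  have ratio_sub_one {a b : ℝ} (ha : c ≤ a) (hb : c ≤ b) : log a - log b ≤ |a - b| / c := by
    have := hc.trans_le ha
    have := hc.trans_le hb
    calc log a - log b = log (a / b) := by rw [log_div] <;> positivity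
      _ ≤ a / b - 1 := log_le_sub_one_of_pos (by positivity)
      _ = (a - b) / b := by field_simp
      _ ≤ |a - b| / c := by gcongr; exact le_abs_self _
  rw [log_div (by linarith) (by linarith), abs_le]
  constructor
  · have := ratio_sub_one hy hx
    rw [abs_sub_comm] at this
    linarith
  · exact ratio_sub_one hx hy

theorem goldenRatio_inv_pow_le {v d : ℕ} (h : 5 * v ≤ d) : φ⁻¹ ^ d ≤ 1 / 10 ^ v := by
  have := inv_pos.2 goldenRatio_pos
  have := goldenRatio_inv_lt
  calc φ⁻¹ ^ d ≤ φ⁻¹ ^ (5 * v) := pow_le_pow_of_le_one (by linarith) (by linarith) h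
    _ = (φ⁻¹ ^ 5) ^ v := pow_mul _ _ _
    _ ≤ (0.6181 ^ 5) ^ v := by gcongr
    _ ≤ (1 / 10) ^ v := by gcongr; norm_num
    _ = 1 / 10 ^ v := one_div_pow _ _

theorem tribonacciConst_inv_pow_le {v e : ℕ} (h : 4 * v ≤ e) : τ⁻¹ ^ e ≤ 1 / 10 ^ v := by
  have := inv_pos.2 tribonacciConst_pos
  have := tribonacciConst_inv_lt
  calc τ⁻¹ ^ e ≤ τ⁻¹ ^ (4 * v) := pow_le_pow_of_le_one (by linarith) (by linarith) h
    _ = (τ⁻¹ ^ 4) ^ v := pow_mul _ _ _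
    _ ≤ (0.544 ^ 4) ^ v := by gcongr
    _ ≤ (1 / 10) ^ v := by gcongr; norm_num
    _ = 1 / 10 ^ v := one_div_pow _ _

/-- Two representations `F n - T m = F (n - d) - T (m - e)` of an integer, with `n` so large that
the dominant Binet terms outweigh the remaining ones. -/
structure Coincidence (n m d e : ℕ) : Prop where
  one_le_d : 1 ≤ d
  one_le_e : 1 ≤ e
  two_add_d_le : 2 + d ≤ n
  two_add_e_le : 2 + e ≤ m
  thirty_le : 30 ≤ n
  eq : (Nat.fib n : ℤ) - trib m = Nat.fib (n - d) - trib (m - e)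

namespace Coincidence

variable {n m d e i j v : ℕ}

theorem abs_main_terms_sub_le (S : Coincidence n m d e) :
    |goldenTerm n * cofactor φ d - tribonacciTerm m * cofactor τ e| ≤ 3 := by
  obtain ⟨hd, he, hn, hm, -, heq⟩ := S
  obtain ⟨n', rfl⟩ := Nat.exists_eq_add_of_le' (by omega : d ≤ n)
  obtain ⟨m', rfl⟩ := Nat.exists_eq_add_of_le' (by omega : e ≤ m)
  rw [Nat.add_sub_cancel, Nat.add_sub_cancel] at heq
  have heq' : (Nat.fib (n' + d) : ℝ) - trib (m' + e) = Nat.fib n' - trib m' := by exact_mod_cast heq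
  have fib_n := abs_le.1 (abs_fib_sub_goldenTerm_le (n' + d))
  have fib_n' := abs_le.1 (abs_fib_sub_goldenTerm_le n')
  have trib_m := abs_le.1 (abs_trib_sub_tribonacciTerm_le (m' + e))
  have trib_m' := abs_le.1 (abs_trib_sub_tribonacciTerm_le m')
  rw [goldenTerm_mul_cofactor _ hd, tribonacciTerm_mul_cofactor _ he, abs_le]
  constructor <;> linarith

theorem hundred_le_goldenTerm (S : Coincidence n m d e) : 100 ≤ goldenTerm n := by
  rw [goldenTerm, le_div_iff₀ (by positivity)]
  calc 100 * √5 ≤ 1.618 ^ 30 := by linarith [sqrt_five_lt]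
    _ ≤ φ ^ 30 := by gcongr; exact goldenRatio_gt.le
    _ ≤ φ ^ n := pow_le_pow_right₀ one_lt_goldenRatio.le S.thirty_le

theorem goldenTerm_le (S : Coincidence n m d e) : goldenTerm n ≤ 3 * tribonacciTerm m := by
  have := (abs_le.1 S.abs_main_terms_sub_le).2
  have := S.hundred_le_goldenTerm
  nlinarith [cofactor_goldenRatio_gt d, cofactor_tribonacciConst_le_one e, tribonacciTerm_pos m]

theorem tribonacciTerm_le (S : Coincidence n m d e) : tribonacciTerm m ≤ 3 * goldenTerm n := by
  have := (abs_le.1 S.abs_main_terms_sub_le).1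
  have := S.hundred_le_goldenTerm
  nlinarith [cofactor_tribonacciConst_gt e, cofactor_goldenRatio_le_one d, goldenTerm_pos n]

theorem one_le_goldenTerm_mul_inv_pow (S : Coincidence n m d e) : 1 ≤ goldenTerm n * φ⁻¹ ^ d := by
  obtain ⟨k, rfl⟩ := Nat.exists_eq_add_of_le S.two_add_d_le
  rw [goldenTerm, div_mul_eq_mul_div, show 2 + d + k = k + 2 + d by omega,
    pow_add_mul_inv_pow goldenRatio_ne_zero, one_le_div (by positivity)]
  calc √5 ≤ φ ^ 2 := by linarith [sqrt_five_lt, goldenRatio_sq, goldenRatio_gt]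
    _ ≤ φ ^ (k + 2) := pow_le_pow_right₀ one_lt_goldenRatio.le (by omega)

theorem one_le_tribonacciTerm_mul_inv_pow (S : Coincidence n m d e) :
    1 ≤ tribonacciTerm m * τ⁻¹ ^ e := by
  have := tribonacciConst_gt
  obtain ⟨k, rfl⟩ := Nat.exists_eq_add_of_le S.two_add_e_le
  rw [tribonacciTerm, div_mul_eq_mul_div, show 2 + e + k + 1 = k + 3 + e by omega,
    pow_add_mul_inv_pow tribonacciConst_pos.ne', one_le_div tribonacciDeriv_pos]
  calc tribonacciDeriv ≤ 1.839 ^ 3 := tribonacciDeriv_lt.le.trans (by norm_num)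
    _ ≤ τ ^ 3 := by gcongr
    _ ≤ τ ^ (k + 3) := pow_le_pow_right₀ (by linarith) (by omega)

theorem abs_logGap_le_of_abs_cofactor_sub_le (S : Coincidence n m d e) {T : ℝ}
    (hi : |cofactor φ i - cofactor φ d| ≤ T) (hj : |cofactor τ j - cofactor τ e| ≤ T)
    (hT : 1 ≤ 3 * goldenTerm n * T) : |logGap n m i j| ≤ 100 * T := by
  have hP := goldenTerm_pos n
  have hQ := tribonacciTerm_pos m
  have hT0 : 0 ≤ T := (abs_nonneg _).trans hi
  have golden : 0.15 * goldenTerm n ≤ goldenTerm n * cofactor φ i := by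
    nlinarith [cofactor_goldenRatio_gt i]
  have tribonacci : 0.15 * goldenTerm n ≤ tribonacciTerm m * cofactor τ j := by
    nlinarith [cofactor_tribonacciConst_gt j, S.goldenTerm_le]
  have golden_sub : |goldenTerm n * cofactor φ i - goldenTerm n * cofactor φ d| ≤
      goldenTerm n * T := by
    rw [← mul_sub, abs_mul, abs_of_pos hP]
    gcongr
  have tribonacci_sub : |tribonacciTerm m * cofactor τ e - tribonacciTerm m * cofactor τ j| ≤
      3 * goldenTerm n * T := by
    rw [← mul_sub, abs_mul, abs_of_pos hQ, abs_sub_comm]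
    gcongr
    exact S.tribonacciTerm_le
  have sub_le : |goldenTerm n * cofactor φ i - tribonacciTerm m * cofactor τ j| ≤
      13 * (goldenTerm n * T) := by
    have := abs_sub_le (goldenTerm n * cofactor φ i) (goldenTerm n * cofactor φ d)
      (tribonacciTerm m * cofactor τ j)
    have := abs_sub_le (goldenTerm n * cofactor φ d) (tribonacciTerm m * cofactor τ e)
      (tribonacciTerm m * cofactor τ j)
    linarith [S.abs_main_terms_sub_le]
  calc |logGap n m i j| ≤ _ := abs_log_div_le (by positivity) golden tribonacci
    _ ≤ 13 * (goldenTerm n * T) / (0.15 * goldenTerm n) := by gcongr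
    _ = 13 / 0.15 * T := by field_simp
    _ ≤ 100 * T := by gcongr; norm_num

theorem abs_logGap_zero_le (S : Coincidence n m d e) (h : 5 * v ≤ d)
    (hj : |cofactor τ j - cofactor τ e| ≤ 1 / 10 ^ v) :
    |logGap n m 0 j| ≤ 100 * (1 / 10 ^ v) := by
  have small := goldenRatio_inv_pow_le h
  refine S.abs_logGap_le_of_abs_cofactor_sub_le ?_ hj ?_
  · rwa [abs_cofactor_zero_sub φ goldenRatio_pos.le S.one_le_d]
  · nlinarith [S.one_le_goldenTerm_mul_inv_pow, goldenTerm_pos n]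

theorem abs_logGap_zero_right_le (S : Coincidence n m d e) (h : 4 * v ≤ e)
    (hi : |cofactor φ i - cofactor φ d| ≤ 1 / 10 ^ v) :
    |logGap n m i 0| ≤ 100 * (1 / 10 ^ v) := by
  have small := tribonacciConst_inv_pow_le h
  refine S.abs_logGap_le_of_abs_cofactor_sub_le hi ?_ ?_
  · rwa [abs_cofactor_zero_sub τ tribonacciConst_pos.le S.one_le_e]
  · calc 1 ≤ tribonacciTerm m * τ⁻¹ ^ e := S.one_le_tribonacciTerm_mul_inv_pow
      _ ≤ 3 * goldenTerm n * (1 / 10 ^ v) := by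
        have := inv_pos.2 tribonacciConst_pos
        exact mul_le_mul S.tribonacciTerm_le small (by positivity) (by linarith [goldenTerm_pos n])

theorem abs_logGap_zero_zero_le (S : Coincidence n m d e) (hd : 5 * v ≤ d) (he : 4 * v ≤ e) :
    |logGap n m 0 0| ≤ 100 * (1 / 10 ^ v) := by
  refine S.abs_logGap_zero_le hd ?_
  rw [abs_cofactor_zero_sub τ tribonacciConst_pos.le S.one_le_e]
  exact tribonacciConst_inv_pow_le he

theorem abs_logGap_zero_left_le (S : Coincidence n m d e) (h : 5 * v ≤ d) :
    |logGap n m 0 e| ≤ 100 * (1 / 10 ^ v) :=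
  S.abs_logGap_zero_le h (by simp)

theorem abs_logGap_right_zero_le (S : Coincidence n m d e) (h : 4 * v ≤ e) :
    |logGap n m d 0| ≤ 100 * (1 / 10 ^ v) :=
  S.abs_logGap_zero_right_le h (by simp)

theorem abs_logGap_le (S : Coincidence n m d e) (h : 5 * v ≤ n) :
    |logGap n m d e| ≤ 100 * (1 / 10 ^ v) := by
  have small := goldenRatio_inv_pow_le h
  refine S.abs_logGap_le_of_abs_cofactor_sub_le (by simp) (by simp) ?_
  have unit : goldenTerm n * φ⁻¹ ^ n * √5 = 1 := by
    rw [goldenTerm, div_mul_eq_mul_div, div_mul_cancel₀ _ (by positivity), ← mul_pow,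
      mul_inv_cancel₀ goldenRatio_ne_zero, one_pow]
  have : goldenTerm n * φ⁻¹ ^ n ≤ goldenTerm n * (1 / 10 ^ v) := by
    gcongr
    exact (goldenTerm_pos n).le
  have := mul_nonneg (goldenTerm_pos n).le (by positivity : (0 : ℝ) ≤ 1 / 10 ^ v)
  nlinarith [sqrt_five_lt, sqrt_five_gt]

theorem succ_m_le (S : Coincidence n m d e) : m + 1 ≤ n := by
  by_contra! hlt
  have := tribonacciConst_gt
  have := tribonacciConst_pos
  have := goldenRatio_pos
  have growth : 1.13 * φ ≤ τ := by linarith [goldenRatio_lt]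
  have upper : τ ^ (n + 1) ≤ 3 * tribonacciDeriv * (φ ^ n / √5) :=
    calc τ ^ (n + 1) ≤ τ ^ (m + 1) := pow_le_pow_right₀ (by linarith) (by omega)
      _ = tribonacciDeriv * tribonacciTerm m := by
        rw [tribonacciTerm, mul_div_cancel₀ _ tribonacciDeriv_pos.ne']
      _ ≤ tribonacciDeriv * (3 * goldenTerm n) := by
        gcongr
        exacts [tribonacciDeriv_pos.le, S.tribonacciTerm_le]
      _ = 3 * tribonacciDeriv * (φ ^ n / √5) := by rw [goldenTerm]; ring
  have lower : 30 * φ ^ n ≤ τ ^ (n + 1) :=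
    calc 30 * φ ^ n ≤ 1.13 ^ 30 * φ ^ n * 1 := by rw [mul_one]; gcongr; norm_num
      _ ≤ 1.13 ^ n * φ ^ n * τ := by
        gcongr
        exacts [by norm_num, S.thirty_le, by linarith]
      _ = (1.13 * φ) ^ n * τ := by rw [mul_pow]
      _ ≤ τ ^ n * τ := by gcongr
      _ = τ ^ (n + 1) := (pow_succ _ _).symm
  have : φ ^ n / √5 ≤ φ ^ n := div_le_self (by positivity) (by linarith [sqrt_five_gt])
  nlinarith [tribonacciDeriv_lt, tribonacciDeriv_gt, pow_pos goldenRatio_pos n]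

end Coincidence

end Binet

section BakerBound

open Real
open scoped goldenRatio

local notation "τ" => tribonacciConst

namespace IsIntegralMultiplier

theorem cofactor {x : ℝ} (h : IsIntegralMultiplier orderBasis x⁻¹ 3) (d : ℕ) :
    IsIntegralMultiplier orderBasis (cofactor x d) (3 ^ (d + 1)) := by
  have one_le : (1 : ℝ) ≤ 3 ^ d := one_le_pow₀ (by norm_num)
  unfold _root_.cofactor
  split_ifs
  · exact one.mono (one_le_pow₀ (by norm_num))
  · have := one.add ((intCast (-1)).mul (h.pow d))
    norm_num [← sub_eq_add_neg, -inv_pow] at this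
    refine this.mono ?_
    rw [pow_succ]
    linarith

theorem sqrt_five : IsIntegralMultiplier orderBasis √5 9 := by
  have := ((intCast 2).mul goldenRatio).add (intCast (-1))
  norm_num [← sub_eq_add_neg] at this
  rw [sqrt_five_eq]
  exact this.mono (by norm_num)

theorem tribonacciDeriv : IsIntegralMultiplier orderBasis tribonacciDeriv 81 := by
  have := (((intCast 3).mul (tribonacciConst.pow 2)).add ((intCast (-2)).mul tribonacciConst)).add
    (intCast (-1))
  norm_num [← sub_eq_add_neg] at this
  exact this.mono (by norm_num)

end IsIntegralMultiplier

theorem logGap_eq (n m i j : ℕ) :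
    logGap n m i j = n * log φ - (m + 1 : ℕ) * log τ +
      log (tribonacciDeriv * cofactor φ i / (√5 * cofactor τ j)) := by
  have := goldenRatio_pos.ne'
  have := tribonacciConst_pos.ne'
  have := tribonacciDeriv_pos.ne'
  have : cofactor φ i ≠ 0 := by linarith [cofactor_goldenRatio_gt i]
  have : cofactor τ j ≠ 0 := by linarith [cofactor_tribonacciConst_gt j]
  have split : goldenTerm n * cofactor φ i / (tribonacciTerm m * cofactor τ j) =
      φ ^ n / τ ^ (m + 1) * (tribonacciDeriv * cofactor φ i / (√5 * cofactor τ j)) := by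
    unfold goldenTerm tribonacciTerm
    field_simp
  rw [logGap, split, log_mul (by positivity) (by positivity), log_div (by positivity)
    (by positivity), log_pow, log_pow]

theorem abs_log_cofactor_ratio_le (i j : ℕ) :
    |log (tribonacciDeriv * cofactor φ i / (√5 * cofactor τ j))| ≤ 5 := by
  have := cofactor_goldenRatio_gt i
  have := cofactor_goldenRatio_le_one i
  have := cofactor_tribonacciConst_gt j
  have := cofactor_tribonacciConst_le_one j
  have := tribonacciDeriv_gt
  have := tribonacciDeriv_lt
  have := sqrt_five_gt
  have := sqrt_five_lt
  have num_lower : 1 ≤ tribonacciDeriv * cofactor φ i := by nlinarith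
  have num_upper : tribonacciDeriv * cofactor φ i ≤ 6 := by nlinarith
  have den_lower : 1 ≤ √5 * cofactor τ j := by nlinarith
  have den_upper : √5 * cofactor τ j ≤ 6 := by nlinarith
  calc _ ≤ |tribonacciDeriv * cofactor φ i - √5 * cofactor τ j| / 1 :=
        abs_log_div_le one_pos num_lower den_lower
    _ ≤ 5 := by rw [div_one, abs_le]; constructor <;> linarith

/-- The number of decimal digits that the linear form `logGap` can agree with zero, according to
the Baker type lower bound with parameters `G`, `t` and `w`. -/
def bakerBound (G t w : ℕ) : ℕ := 723 * 10 ^ 57 * G ^ 3 * t ^ 5 * w ^ 9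

/-- The condition on `n` under which the Baker type bound with parameters `G`, `t` and `w` holds. -/
structure BakerRange (G t w n : ℕ) : Prop where
  one_le_t : 1 ≤ t
  one_le_w : 1 ≤ w
  mul_le : G * t ≤ w ^ 10
  upper : 64 * 10 ^ 12 * G * t * w ^ 2 * (n + 1) ≤ 3 ^ t
  lower : 64 * 10 ^ 12 * G * t * w ^ 2 ≤ n

theorem BakerRange.lt_abs_logGap {n m i j G t w v : ℕ} (h : BakerRange G t w n) (hi : i + 5 ≤ G)
    (hj : j + 5 ≤ G) (hmn : m + 1 ≤ n) (hv : bakerBound G t w < v) :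
    100 * (1 / 10 ^ v) < |logGap n m i j| := by
  by_contra! hle
  have multiplier_x : IsIntegralMultiplier orderBasis (tribonacciDeriv * cofactor φ i) (3 ^ G) :=
    (IsIntegralMultiplier.tribonacciDeriv.mul (.cofactor .goldenRatio_inv i)).mono <|
      calc (81 : ℝ) * 3 ^ (i + 1) = 3 ^ (i + 5) := by ring
        _ ≤ 3 ^ G := pow_le_pow_right₀ (by norm_num) hi
  have multiplier_y : IsIntegralMultiplier orderBasis (√5 * cofactor τ j) (3 ^ G) :=
    (IsIntegralMultiplier.sqrt_five.mul (.cofactor .tribonacciConst_inv j)).mono <|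
      calc (9 : ℝ) * 3 ^ (j + 1) = 3 ^ (j + 3) := by ring
        _ ≤ 3 ^ G := pow_le_pow_right₀ (by norm_num) (by omega)
  have lower := one_le_abs_linearForm_mul (n := n) (m := m + 1) h.one_le_t (by omega) h.one_le_w
    (mul_pos tribonacciDeriv_pos (by linarith [cofactor_goldenRatio_gt i]))
    (mul_pos (by positivity) (by linarith [cofactor_tribonacciConst_gt j]))
    multiplier_x multiplier_y
    ((abs_log_cofactor_ratio_le i j).trans (by exact_mod_cast (by omega : 5 ≤ G)))
    h.mul_le h.upper (le_trans (by gcongr) h.upper) h.lower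
  rw [← logGap_eq] at lower
  change 1 ≤ |logGap n m i j| * 3 ^ bakerBound G t w at lower
  have ten_pow_le : (10 : ℝ) ^ v ≤ 100 * 3 ^ bakerBound G t w := by
    have : 1 ≤ 100 * (1 / 10 ^ v) * (3 : ℝ) ^ bakerBound G t w := lower.trans (by gcongr)
    field_simp at this
    linarith
  have two_le : 2 ≤ bakerBound G t w :=
    calc 2 ≤ 723 * 10 ^ 57 * 1 ^ 3 * 1 ^ 5 * 1 ^ 9 := by norm_num
      _ ≤ bakerBound G t w := by
        have := h.one_le_t
        have := h.one_le_w
        have : 1 ≤ G := by omega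
        unfold bakerBound
        gcongr
  obtain ⟨k, hk⟩ := Nat.exists_eq_add_of_le two_le
  have : (10 : ℝ) ^ (k + 3) ≤ 10 ^ v := pow_le_pow_right₀ (by norm_num) (by omega)
  have : (3 : ℝ) ^ k ≤ 10 ^ k := by gcongr; norm_num
  have : (0 : ℝ) < 10 ^ k := by positivity
  rw [hk] at ten_pow_le
  linarith [pow_add (10 : ℝ) k 3, pow_add (3 : ℝ) 2 k]

end BakerBound

section FixedPoint

open Finset Real

/-- The natural number `z` approximates the real number `x` from below, up to an error `e`. -/
def IsLowerApprox (z : ℕ) (x e : ℝ) : Prop := (z : ℝ) ≤ x ∧ x ≤ z + e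

namespace IsLowerApprox

variable {S z h : ℕ} {x y e f : ℝ}

theorem mono (hz : IsLowerApprox z x e) (hef : e ≤ f) : IsLowerApprox z x f :=
  ⟨hz.1, by linarith [hz.2]⟩

theorem natDiv (S k : ℕ) : IsLowerApprox (S / k) (S / k) 1 :=
  ⟨Nat.cast_div_le, by simpa [Nat.floor_div_eq_div] using (Nat.lt_floor_add_one (S / k : ℝ)).le⟩

theorem add (hz : IsLowerApprox z x e) (hh : IsLowerApprox h y f) :
    IsLowerApprox (z + h) (x + y) (e + f) := by
  constructor <;> push_cast <;> linarith [hz.1, hz.2, hh.1, hh.2]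

theorem mul_div (hS : 0 < S) (hx : 0 ≤ x) (hy : 0 ≤ y) (hz : IsLowerApprox z (S * x) e)
    (hh : IsLowerApprox h (S * y) f) :
    IsLowerApprox (z * h / S) (S * (x * y)) (e * y + f * x + 1) := by
  have : (0 : ℝ) < S := by exact_mod_cast hS
  obtain ⟨lower, upper⟩ := natDiv (z * h) S
  push_cast at lower upper
  have product_le : (z : ℝ) * h ≤ S * x * (S * y) :=
    mul_le_mul hz.1 hh.1 (by positivity) (by positivity)
  have le_product : S * x * (S * y) ≤ z * h + S * (e * y + f * x) := by
    nlinarith [mul_le_mul_of_nonneg_right hz.2 (by positivity : 0 ≤ S * y),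
      mul_le_mul_of_nonneg_left hh.2 (Nat.cast_nonneg (α := ℝ) z), hz.1, hh.2, hh.1]
  have eq_div : S * (x * y) = S * x * (S * y) / S := by field_simp
  constructor
  · refine lower.trans ?_
    rw [eq_div]
    gcongr
  · calc S * (x * y) = S * x * (S * y) / S := eq_div
      _ ≤ (z * h + S * (e * y + f * x)) / S := by gcongr
      _ = z * h / S + (e * y + f * x) := by field_simp
      _ ≤ _ := by linarith

end IsLowerApprox

/-- Equal to `f n`. The kernel substitutes arguments unevaluated, so that `n` would be recomputed at
each of its occurrences in `f n`; the case distinction makes the kernel reduce `n` to a literal. -/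
def force {α : Type} (n : ℕ) (f : ℕ → α) : α :=
  match n with
  | 0 => f 0
  | k + 1 => f (k + 1)

/-- The analogue of `force` for lists. -/
def forceList {α : Type} (l : List ℕ) (f : List ℕ → α) : α :=
  match l with
  | [] => f []
  | a :: l => f (a :: l)

theorem force_eq {α : Type} (n : ℕ) (f : ℕ → α) : force n f = f n := by cases n <;> rfl

theorem forceList_eq {α : Type} (l : List ℕ) (f : List ℕ → α) : forceList l f = f l := by
  cases l <;> rfl

/-- If `h` and `z` approximate `S * u` and `S * x`, this approximates `S * (u * x ^ k)`. -/
def scaledPow (S z : ℕ) : ℕ → ℕ → ℕ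
  | 0, h => h
  | k + 1, h => force (h * z / S) (scaledPow S z k)

/-- If `h` and `z` approximate `S * u` and `S * x`, this approximates `S` times
`u * x ^ k + ∑ i < k, x ^ (i + 1) / (i + 1)`, by Horner's scheme. -/
def logSum (S z : ℕ) : ℕ → ℕ → ℕ
  | 0, h => h
  | k + 1, h => force ((h + S / (k + 1)) * z / S) (logSum S z k)

/-- If `z` approximates `2 ^ B * x ^ d` with `x ≤ 0.62`, this approximates
`-2 ^ B * log (1 - x ^ d)`; the number of terms is chosen so that the remainder of the logarithmic
series is below the rounding errors. -/
def negLog (B z d : ℕ) : ℕ := logSum (2 ^ B) z (3 * B / (2 * d) + 1) 0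

/-- If `z` approximates `2 ^ B * x`, this approximates `-2 ^ B * log (1 - x ^ d)`. -/
def negLogPow (B z d : ℕ) : ℕ := force (scaledPow (2 ^ B) z d (2 ^ B)) fun h => negLog B h d

section Soundness

variable {B S z h d : ℕ} {x u : ℝ}

-- The error bound `14` is preserved because `0.62 * 14 + 4 + 1 ≤ 14`.
theorem IsLowerApprox.mul_div_of_le_one (hS : 0 < S) (hx0 : 0 ≤ x) (hx : x ≤ 0.62)
    (hz : IsLowerApprox z (S * x) 4) (hu0 : 0 ≤ u) (hu1 : u ≤ 1) (hh : IsLowerApprox h (S * u) 14) :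
    IsLowerApprox (h * z / S) (S * (u * x)) 14 :=
  (hh.mul_div hS hu0 hx0 hz).mono (by linarith)

theorem isLowerApprox_scaledPow (hS : 0 < S) (hx0 : 0 ≤ x) (hx : x ≤ 0.62)
    (hz : IsLowerApprox z (S * x) 4) (k : ℕ) {u : ℝ} (hu0 : 0 ≤ u) (hu1 : u ≤ 1)
    (hh : IsLowerApprox h (S * u) 14) :
    IsLowerApprox (scaledPow S z k h) (S * (u * x ^ k)) 14 := by
  induction k generalizing h u with
  | zero => simpa [scaledPow] using hh
  | succ k ih =>
    rw [scaledPow, force_eq, pow_succ', ← mul_assoc u]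
    exact ih (mul_nonneg hu0 hx0) (mul_le_one₀ hu1 hx0 (by linarith))
      (hz.mul_div_of_le_one hS hx0 hx hu0 hu1 hh)

-- The error bound `120` is preserved because `0.62 * (120 + 1) + 14 * 3 + 1 ≤ 120`.
theorem isLowerApprox_logSum (hS : 0 < S) (hx0 : 0 ≤ x) (hx : x ≤ 0.62)
    (hz : IsLowerApprox z (S * x) 14) (k : ℕ) {u : ℝ} (hu0 : 0 ≤ u) (hu : u ≤ 2)
    (hh : IsLowerApprox h (S * u) 120) :
    IsLowerApprox (logSum S z k h)
      (S * (u * x ^ k + ∑ i ∈ range k, x ^ (i + 1) / (i + 1))) 120 := by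
  induction k generalizing h u with
  | zero => simpa [logSum] using hh
  | succ k ih =>
    have inv_le : (1 : ℝ) / (k + 1 : ℕ) ≤ 1 := by
      rw [div_le_one (by positivity)]
      norm_num
    have : (0 : ℝ) ≤ 1 / (k + 1 : ℕ) := by positivity
    have sum_approx := hh.add (.natDiv S (k + 1))
    rw [div_eq_mul_one_div (S : ℝ), ← mul_add] at sum_approx
    have step := ih (u := (u + 1 / (k + 1 : ℕ)) * x) (by positivity) (by nlinarith)
      ((sum_approx.mul_div hS (by positivity) hx0 hz).mono (by linarith))
    rw [logSum, force_eq]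
    convert step using 2
    rw [sum_range_succ]
    push_cast
    ring

theorem two_pow_mul_pow_le_one (hd : 1 ≤ d) (hx0 : 0 ≤ x) (hx : x ≤ 0.62) :
    (2 : ℝ) ^ B * (x ^ d) ^ (3 * B / (2 * d) + 1) ≤ 1 := by
  have exponent : 3 * B ≤ d * (3 * B / (2 * d) + 1) * 2 := by
    have := Nat.lt_mul_div_succ (3 * B) (by omega : 0 < 2 * d)
    linarith
  refine (sq_le_one_iff₀ (by positivity)).1 ?_
  calc (2 ^ B * (x ^ d) ^ (3 * B / (2 * d) + 1)) ^ 2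
      = 4 ^ B * x ^ (d * (3 * B / (2 * d) + 1) * 2) := by
        rw [mul_pow, ← pow_mul x, ← pow_mul x, mul_assoc d, ← pow_mul, mul_comm B 2, pow_mul 2 2 B]
        norm_num
    _ ≤ 4 ^ B * x ^ (3 * B) := by
        gcongr ?_ * ?_
        exact pow_le_pow_of_le_one hx0 (by linarith) exponent
    _ = (4 * x ^ 3) ^ B := by rw [mul_pow, pow_mul]
    _ ≤ (4 * 0.62 ^ 3) ^ B := by gcongr
    _ ≤ 1 := pow_le_one₀ (by norm_num) (by norm_num)

theorem abs_negLog_add_log_le (hd : 1 ≤ d) (hx0 : 0 ≤ x) (hx : x ≤ 0.62)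
    (hz : IsLowerApprox z ((2 ^ B : ℕ) * x ^ d) 14) :
    |(negLog B z d : ℝ) + 2 ^ B * log (1 - x ^ d)| ≤ 125 := by
  have y_le : x ^ d ≤ 0.62 := (pow_le_of_le_one hx0 (by linarith) (by omega)).trans hx
  have remainder := two_pow_mul_pow_le_one (B := B) hd hx0 hx
  have hy0 : 0 ≤ x ^ d := pow_nonneg hx0 d
  have approx := isLowerApprox_logSum (by positivity) hy0 y_le hz (3 * B / (2 * d) + 1)
    le_rfl (by norm_num) (h := 0) ⟨by simp, by simp⟩
  rw [negLog]
  generalize x ^ d = y at *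
  generalize 3 * B / (2 * d) + 1 = K at *
  have series : 2 ^ B * |∑ i ∈ range K, y ^ (i + 1) / (i + 1) + log (1 - y)| ≤ 2 :=
    calc _ ≤ 2 ^ B * (|y| ^ (K + 1) / (1 - |y|)) := by
          gcongr
          exact abs_log_sub_add_sum_range_le (by rw [abs_of_nonneg hy0]; linarith) K
      _ = 2 ^ B * y ^ K * (y / (1 - y)) := by rw [abs_of_nonneg hy0]; ring
      _ ≤ 1 * 2 := by
          gcongr
          · exact div_nonneg hy0 (by linarith)
          · rw [div_le_iff₀ (by linarith)]
            linarith
      _ = 2 := one_mul 2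
  obtain ⟨lower, upper⟩ := approx
  rw [zero_mul, zero_add] at lower upper
  push_cast at lower upper
  rw [← abs_of_pos (a := (2 : ℝ) ^ B) (by positivity), ← abs_mul, mul_add] at series
  have := abs_le.1 series
  rw [abs_le]
  constructor <;> linarith

theorem abs_negLogPow_add_log_le (hd : 1 ≤ d) (hx0 : 0 ≤ x) (hx : x ≤ 0.62)
    (hz : IsLowerApprox z ((2 ^ B : ℕ) * x) 4) :
    |(negLogPow B z d : ℝ) + 2 ^ B * log (1 - x ^ d)| ≤ 125 := by
  rw [negLogPow, force_eq]
  refine abs_negLog_add_log_le hd hx0 hx ?_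
  have := isLowerApprox_scaledPow (by positivity) hx0 hx hz d zero_le_one le_rfl
    (h := 2 ^ B) ⟨by simp, by simp⟩
  rwa [one_mul] at this

theorem abs_natCast_sub_sub_le {p q : ℕ} {x : ℝ} (hx : 0 ≤ x) :
    |((p - q : ℕ) : ℝ) - x| ≤ |(p : ℝ) - q - x| := by
  rcases le_total q p with h | h
  · rw [Nat.cast_sub h]
  · have : (p : ℝ) ≤ q := by exact_mod_cast h
    rw [Nat.sub_eq_zero_of_le h, Nat.cast_zero, zero_sub, abs_neg, abs_of_nonneg hx]
    exact le_abs.2 (.inr (by linarith))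

end Soundness

end FixedPoint

section LogIdentities

open Real
open scoped goldenRatio

local notation "τ" => tribonacciConst

theorem goldenRatio_inv_sq_add : φ⁻¹ ^ 2 + φ⁻¹ = 1 := by
  rw [inv_goldenRatio, neg_sq, goldenConj_sq]
  ring

theorem tribonacciConst_inv_cube_add : τ⁻¹ ^ 3 + τ⁻¹ ^ 2 + τ⁻¹ = 1 := by
  have := tribonacciConst_pos.ne'
  field_simp
  linarith [tribonacciConst_cube]

theorem one_sub_goldenRatio_inv_pow_pos {d : ℕ} (hd : 1 ≤ d) : 0 < 1 - φ⁻¹ ^ d :=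
  sub_pos.2 (pow_lt_one₀ (by positivity) (by linarith [goldenRatio_inv_lt]) (by omega))

theorem one_sub_tribonacciConst_inv_pow_pos {d : ℕ} (hd : 1 ≤ d) : 0 < 1 - τ⁻¹ ^ d :=
  sub_pos.2 (pow_lt_one₀ (inv_nonneg.2 tribonacciConst_pos.le)
    (by linarith [tribonacciConst_inv_lt]) (by omega))

theorem log_goldenRatio_eq : log φ = log (1 - φ⁻¹ ^ 6) - 2 * log (1 - φ⁻¹ ^ 3) := by
  have factor : 1 - φ⁻¹ ^ 6 = φ * (1 - φ⁻¹ ^ 3) ^ 2 := by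
    have relation := goldenRatio_inv_sq_add
    have inverse : φ * φ⁻¹ = 1 := mul_inv_cancel₀ goldenRatio_ne_zero
    grind
  rw [factor, log_mul goldenRatio_ne_zero
    (pow_ne_zero _ (one_sub_goldenRatio_inv_pow_pos (by norm_num)).ne'), log_pow]
  push_cast
  ring

theorem log_tribonacciConst_eq : log τ = log (1 - τ⁻¹ ^ 4) - 4 * log (1 - τ⁻¹ ^ 3) := by
  have factor : 1 - τ⁻¹ ^ 4 = τ * (1 - τ⁻¹ ^ 3) ^ 4 := by
    have relation := tribonacciConst_inv_cube_add
    have inverse : τ * τ⁻¹ = 1 := mul_inv_cancel₀ tribonacciConst_pos.ne'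
    grind
  rw [factor, log_mul tribonacciConst_pos.ne'
    (pow_ne_zero _ (one_sub_tribonacciConst_inv_pow_pos (by norm_num)).ne'), log_pow]
  push_cast
  ring

theorem log_sqrt_five_eq : log √5 = 2 * log φ + log (1 - φ⁻¹ ^ 4) := by
  have factor : √5 = φ ^ 2 * (1 - φ⁻¹ ^ 4) := by
    have := sqrt_five_eq
    have relation := goldenRatio_inv_sq_add
    have inverse : φ * φ⁻¹ = 1 := mul_inv_cancel₀ goldenRatio_ne_zero
    grind
  rw [factor, log_mul (pow_ne_zero _ goldenRatio_ne_zero)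
    (one_sub_goldenRatio_inv_pow_pos (by norm_num)).ne', log_pow]
  push_cast
  ring

theorem log_tribonacciDeriv_eq : log tribonacciDeriv =
    3 * log τ + log (1 - τ⁻¹ ^ 10) + log (1 - τ⁻¹ ^ 3) - log (1 - τ⁻¹ ^ 5) := by
  have factor : tribonacciDeriv * (1 - τ⁻¹ ^ 5) = τ ^ 3 * (1 - τ⁻¹ ^ 10) * (1 - τ⁻¹ ^ 3) := by
    have relation := tribonacciConst_inv_cube_add
    have inverse : τ * τ⁻¹ = 1 := mul_inv_cancel₀ tribonacciConst_pos.ne'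
    unfold tribonacciDeriv
    grind
  have logs := congrArg log factor
  have h3 := (one_sub_tribonacciConst_inv_pow_pos (d := 3) (by norm_num)).ne'
  have h5 := (one_sub_tribonacciConst_inv_pow_pos (d := 5) (by norm_num)).ne'
  have h10 := (one_sub_tribonacciConst_inv_pow_pos (d := 10) (by norm_num)).ne'
  have power := pow_ne_zero 3 tribonacciConst_pos.ne'
  rw [log_mul tribonacciDeriv_pos.ne' h5, log_mul (mul_ne_zero power h10) h3,
    log_mul power h10, log_pow] at logs
  push_cast at logs
  linarith

theorem log_cofactor_ratio_eq (i j : ℕ) :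
    log (tribonacciDeriv * cofactor φ i / (√5 * cofactor τ j)) =
      log (tribonacciDeriv / √5) + log (cofactor φ i) - log (cofactor τ j) := by
  have := tribonacciDeriv_pos.ne'
  have : cofactor φ i ≠ 0 := by linarith [cofactor_goldenRatio_gt i]
  have : cofactor τ j ≠ 0 := by linarith [cofactor_tribonacciConst_gt j]
  rw [mul_div_mul_comm, log_mul (by positivity) (by positivity), log_div (by positivity)
    (by positivity), log_div (by positivity) (by positivity)]
  ring

end LogIdentities

section Reduction

open Real
open scoped goldenRatio

local notation "τ" => tribonacciConst

/-- Iteration of `g`, forcing the argument at every step. -/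
def iterateForce (g : ℕ → ℕ) : ℕ → ℕ → ℕ
  | 0, x => x
  | k + 1, x => force (g x) (iterateForce g k)

/-- A candidate for an approximation of `S * φ⁻¹` from below, found by Newton's method. -/
def goldenInvCandidate (S : ℕ) : ℕ :=
  iterateForce (fun z => (z * z + S * S) / (2 * z + S)) 20 S - 2

/-- A candidate for an approximation of `S * τ⁻¹` from below, found by Newton's method. -/
def tribonacciInvCandidate (S : ℕ) : ℕ :=
  iterateForce (fun z =>
    (2 * z * z * z + S * z * z + S * S * S) / (3 * z * z + 2 * S * z + S * S)) 20 S - 2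

/-- Decides whether `x ≤ S * φ⁻¹ ≤ x + 4`, by the sign of `X ^ 2 + X - 1`. -/
def goldenInvCheck (S x : ℕ) : Bool :=
  Nat.ble (x * x + S * x) (S * S) && Nat.ble (S * S) ((x + 4) * (x + 4) + S * (x + 4))

/-- Decides whether `y ≤ S * τ⁻¹ ≤ y + 4`, by the sign of `X ^ 3 + X ^ 2 + X - 1`. -/
def tribonacciInvCheck (S y : ℕ) : Bool :=
  Nat.ble (y * y * y + S * y * y + S * S * y) (S * S * S) &&
    Nat.ble (S * S * S) ((y + 4) * (y + 4) * (y + 4) + S * (y + 4) * (y + 4) + S * S * (y + 4))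

/-- If `x` approximates `2 ^ B * φ⁻¹`, this approximates `2 ^ B * log φ`. -/
def goldenLog (B x : ℕ) : ℕ := 2 * negLogPow B x 3 - negLogPow B x 6

/-- If `y` approximates `2 ^ B * τ⁻¹`, this approximates `2 ^ B * log τ`. -/
def tribonacciLog (B y : ℕ) : ℕ := 4 * negLogPow B y 3 - negLogPow B y 4

/-- If `x, y, a, b` approximate `2 ^ B` times `φ⁻¹, τ⁻¹, log φ, log τ`, this approximates
`2 ^ B * log (tribonacciDeriv / √5)`. -/
def constantLog (B x y a b : ℕ) : ℕ :=
  3 * b + negLogPow B y 5 + negLogPow B x 4 - (negLogPow B y 10 + negLogPow B y 3 + 2 * a)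

/-- The list `l` preceded by the residues of `q * negLog B (2 ^ B * x ^ i) i` modulo `b` for the
`k` indices `i` after `d`, where `z` and `h` approximate `2 ^ B * x` and `2 ^ B * x ^ d`. -/
def residueTable (B z b q : ℕ) : ℕ → ℕ → ℕ → List ℕ → List ℕ
  | 0, _, _, l => l
  | k + 1, d, h, l => force (d + 1) fun d => force (h * z / 2 ^ B) fun h =>
    force (q * negLog B h d % b) fun u => residueTable B z b q k d h (u :: l)

/-- The denominator of a convergent to `a / b`, of size about `Q`. The last two arguments are the
denominators of the two preceding convergents. -/
def convergentDenom (Q : ℕ) : ℕ → ℕ → ℕ → ℕ → ℕ → ℕ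
  | 0, _, _, _, q => q
  | k + 1, a, b, q₀, q =>
    bif Nat.ble Q q then q else
      force (b % a) fun r => force (b / a * q + q₀) fun q₁ => convergentDenom Q k r a q q₁

/-- A bound for `|N * b + W|` in the Baker-Davenport reduction, where `N` is the integer that the
reduction produces from an upper bound `X` for the coefficients, and `W` is `q` times the
approximation to the inhomogeneous term. -/
def reductionTolerance (B X v a b q : ℕ) : ℕ :=
  X * min (q * a % b) (b - q * a % b) + 1000 * q * X + 3375 * q + 100 * 2 ^ B * q / 10 ^ v + 1

/-- No residue `c - u + v` with `u` in `us` and `v` in `vs` is within `T` of `0` modulo `b`. -/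
def gridCheck (b T c : ℕ) (us vs : List ℕ) : Bool :=
  us.all fun u => force (c + (b - u) + T) fun s => vs.all fun v => Nat.blt (2 * T) ((s + v) % b)

/-- The Baker-Davenport reduction with denominator about `Q` in `B`-bit arithmetic, simultaneously
for all cofactors with `i ≤ D` and `j ≤ E`. If it succeeds, then no `logGap n m i j` with `n ≤ X`
vanishes to `v` decimal digits. -/
def reductionCheck (B Q X v D E : ℕ) : Bool :=
  force (goldenInvCandidate (2 ^ B)) fun x => force (tribonacciInvCandidate (2 ^ B)) fun y =>
  force (goldenLog B x) fun a => force (tribonacciLog B y) fun b =>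
  force (convergentDenom Q (10 * B) a b 0 1) fun q =>
  force (reductionTolerance B X v a b q) fun T => force (q * constantLog B x y a b % b) fun c =>
  forceList (residueTable B x b q D 0 (2 ^ B) [0]) fun us =>
  forceList (residueTable B y b q E 0 (2 ^ B) [0]) fun vs =>
    goldenInvCheck (2 ^ B) x && tribonacciInvCheck (2 ^ B) y && Nat.blt 0 b && gridCheck b T c us vs

section Soundness

variable {B S x y a b q r d D E : ℕ}

theorem goldenInvCheck_sound (h : goldenInvCheck S x) : IsLowerApprox x (S * φ⁻¹) 4 := by
  simp only [goldenInvCheck, Bool.and_eq_true, Nat.ble_eq] at h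
  obtain ⟨lower, upper⟩ := h
  have relation := goldenRatio_inv_sq_add
  have : (x : ℝ) * x + S * x ≤ S * S := by exact_mod_cast lower
  have : (S : ℝ) * S ≤ (x + 4) * (x + 4) + S * (x + 4) := by exact_mod_cast upper
  have square : (S * φ⁻¹) * (S * φ⁻¹) + S * (S * φ⁻¹) = S * S := by
    linear_combination (S : ℝ) ^ 2 * relation
  have : 0 ≤ S * φ⁻¹ := by positivity
  have : (0 : ℝ) ≤ S := by positivity
  have : (0 : ℝ) ≤ x := by positivity
  constructor <;> by_contra! hlt <;> nlinarith

theorem tribonacciInvCheck_sound (h : tribonacciInvCheck S y) :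
    IsLowerApprox y (S * τ⁻¹) 4 := by
  simp only [tribonacciInvCheck, Bool.and_eq_true, Nat.ble_eq] at h
  obtain ⟨lower, upper⟩ := h
  have relation := tribonacciConst_inv_cube_add
  have hτ := tribonacciConst_pos
  have strictMono : StrictMonoOn (fun z : ℝ => z * z * z + S * z * z + S * S * z) (Set.Ici 0) := by
    intro z hz w hw hzw
    simp only [Set.mem_Ici] at hz hw
    have : z * z * z < w * w * w := by gcongr
    have : S * z * z ≤ S * w * w := by gcongr
    have : S * S * z ≤ S * S * w := by gcongr
    linarith
  have root : (S * τ⁻¹) * (S * τ⁻¹) * (S * τ⁻¹) + S * (S * τ⁻¹) * (S * τ⁻¹) + S * S * (S * τ⁻¹) =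
      S * S * S := by
    linear_combination (S : ℝ) ^ 3 * relation
  constructor
  · rw [← strictMono.le_iff_le (Set.mem_Ici.2 (by positivity)) (Set.mem_Ici.2 (by positivity))]
    rw [root]
    exact_mod_cast lower
  · rw [← strictMono.le_iff_le (Set.mem_Ici.2 (by positivity)) (Set.mem_Ici.2 (by positivity))]
    rw [root]
    exact_mod_cast upper

theorem abs_goldenLog_sub_le (hx : IsLowerApprox x ((2 ^ B : ℕ) * φ⁻¹) 4) :
    |(goldenLog B x : ℝ) - 2 ^ B * log φ| ≤ 375 := by
  refine (abs_natCast_sub_sub_le (by have := log_goldenRatio_pos; positivity)).trans ?_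
  have h (d : ℕ) (hd : 1 ≤ d) := abs_le.1 <| abs_negLogPow_add_log_le hd (by positivity)
    (goldenRatio_inv_lt.le.trans (by norm_num)) hx
  have := h 3 (by norm_num)
  have := h 6 (by norm_num)
  rw [log_goldenRatio_eq, abs_le]
  push_cast
  constructor <;> linarith

theorem abs_tribonacciLog_sub_le (hy : IsLowerApprox y ((2 ^ B : ℕ) * τ⁻¹) 4) :
    |(tribonacciLog B y : ℝ) - 2 ^ B * log τ| ≤ 625 := by
  refine (abs_natCast_sub_sub_le (by have := log_tribonacciConst_pos; positivity)).trans ?_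
  have h (d : ℕ) (hd : 1 ≤ d) := abs_le.1 <| abs_negLogPow_add_log_le hd
    (inv_nonneg.2 tribonacciConst_pos.le) (tribonacciConst_inv_lt.le.trans (by norm_num)) hy
  have := h 3 (by norm_num)
  have := h 4 (by norm_num)
  rw [log_tribonacciConst_eq, abs_le]
  push_cast
  constructor <;> linarith

theorem abs_constantLog_sub_le (hx : IsLowerApprox x ((2 ^ B : ℕ) * φ⁻¹) 4)
    (hy : IsLowerApprox y ((2 ^ B : ℕ) * τ⁻¹) 4) :
    |(constantLog B x y (goldenLog B x) (tribonacciLog B y) : ℝ) -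
      2 ^ B * log (tribonacciDeriv / √5)| ≤ 3125 := by
  have log_nonneg : 0 ≤ log (tribonacciDeriv / √5) := by
    refine log_nonneg ?_
    rw [one_le_div (by positivity)]
    linarith [tribonacciDeriv_gt, sqrt_five_lt]
  refine (abs_natCast_sub_sub_le (by positivity)).trans ?_
  have hx' := abs_le.1 <| abs_negLogPow_add_log_le (d := 4) (by norm_num) (by positivity)
    (goldenRatio_inv_lt.le.trans (by norm_num)) hx
  have h (d : ℕ) (hd : 1 ≤ d) := abs_le.1 <| abs_negLogPow_add_log_le hd
    (inv_nonneg.2 tribonacciConst_pos.le) (tribonacciConst_inv_lt.le.trans (by norm_num)) hy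
  have := h 3 (by norm_num)
  have := h 5 (by norm_num)
  have := h 10 (by norm_num)
  have := abs_le.1 (abs_goldenLog_sub_le hx)
  have := abs_le.1 (abs_tribonacciLog_sub_le hy)
  rw [log_div tribonacciDeriv_pos.ne' (by positivity), log_tribonacciDeriv_eq, log_sqrt_five_eq,
    abs_le]
  push_cast
  constructor <;> linarith

end Soundness

end Reduction

section ReductionSoundness

open Real
open scoped goldenRatio

local notation "τ" => tribonacciConst

theorem subset_residueTable (B z b q k d h : ℕ) (l : List ℕ) :
    l ⊆ residueTable B z b q k d h l := by
  induction k generalizing d h l with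
  | zero => exact List.Subset.refl l
  | succ k ih =>
    simp only [residueTable, force_eq]
    exact fun _ hu => ih _ _ _ (List.mem_cons_of_mem _ hu)

theorem exists_mem_residueTable {B z b q k d h i : ℕ} {l : List ℕ} {x : ℝ} (hx0 : 0 ≤ x)
    (hx : x ≤ 0.62) (hz : IsLowerApprox z ((2 ^ B : ℕ) * x) 4)
    (hh : IsLowerApprox h ((2 ^ B : ℕ) * x ^ d) 14) (hdi : d < i) (hik : i ≤ d + k) :
    ∃ u : ℕ, |(u : ℝ) + 2 ^ B * log (1 - x ^ i)| ≤ 125 ∧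
      q * u % b ∈ residueTable B z b q k d h l := by
  induction k generalizing d h l with
  | zero => omega
  | succ k ih =>
    have next : IsLowerApprox (h * z / 2 ^ B) ((2 ^ B : ℕ) * x ^ (d + 1)) 14 :=
      pow_succ x d ▸ hz.mul_div_of_le_one (by positivity) hx0 hx (pow_nonneg hx0 d)
        (pow_le_one₀ hx0 (by linarith)) hh
    simp only [residueTable, force_eq]
    obtain rfl | hlt := (Nat.succ_le_of_lt hdi).eq_or_lt
    · exact ⟨_, abs_negLog_add_log_le (by omega) hx0 hx next,
        subset_residueTable _ _ _ _ _ _ _ _ List.mem_cons_self⟩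
    · exact ih next hlt (by omega)

theorem exists_mem_residueTable_cofactor {B z b q i D : ℕ} {x : ℝ} (hx0 : 0 ≤ x⁻¹)
    (hx : x⁻¹ ≤ 0.62) (hz : IsLowerApprox z ((2 ^ B : ℕ) * x⁻¹) 4) (hi : i ≤ D) :
    ∃ u : ℕ, |(u : ℝ) + 2 ^ B * log (cofactor x i)| ≤ 125 ∧
      q * u % b ∈ residueTable B z b q D 0 (2 ^ B) [0] := by
  obtain rfl | hpos := i.eq_zero_or_pos
  · exact ⟨0, by simp [cofactor], subset_residueTable _ _ _ _ _ _ _ _ (by simp)⟩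
  · rw [cofactor, if_neg hpos.ne']
    exact exists_mem_residueTable hx0 hx hz ⟨by simp, by simp⟩ hpos (by omega)

theorem exists_abs_sub_mul_le_min (a : ℕ) {b : ℕ} (hb : 0 < b) :
    ∃ k : ℤ, |(a : ℝ) - k * b| ≤ (min (a % b) (b - a % b) : ℕ) := by
  have lt : ((a % b : ℕ) : ℝ) < b := by exact_mod_cast Nat.mod_lt a hb
  have split : (a : ℝ) = (a / b : ℕ) * b + (a % b : ℕ) := by
    rw [mul_comm]
    exact_mod_cast (Nat.div_add_mod a b).symm
  rcases le_total (a % b) (b - a % b) with h | h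
  · refine ⟨(a / b : ℕ), ?_⟩
    rw [min_eq_left h, abs_le, Int.cast_natCast]
    constructor <;> linarith
  · refine ⟨(a / b : ℕ) + 1, ?_⟩
    rw [min_eq_right h, Nat.cast_sub (Nat.mod_lt a hb).le, abs_le, Int.cast_add, Int.cast_natCast,
      Int.cast_one]
    constructor <;> linarith

theorem mod_le_two_mul_of_modEq {s b T : ℕ} {W N : ℤ} (hs : (s : ℤ) ≡ W + T [ZMOD b])
    (hN : |N * b + W| ≤ T) : s % b ≤ 2 * T := by
  obtain ⟨lower, upper⟩ := abs_le.1 hN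
  obtain ⟨t, ht⟩ := Int.eq_ofNat_of_zero_le (by linarith : 0 ≤ N * b + W + T)
  have : s ≡ t [MOD b] := by
    rw [← Int.natCast_modEq_iff, ← ht, add_assoc]
    exact hs.trans (Int.modEq_iff_dvd.2 ⟨N, by ring⟩)
  calc s % b = t % b := this
    _ ≤ t := Nat.mod_le t b
    _ ≤ 2 * T := by omega

theorem exists_abs_mul_add_le {S α β γ ε : ℝ} {a b q n m X : ℕ} {c : ℤ} (hb : 0 < b)
    (ha : |a - S * α| ≤ 375) (hβ : |b - S * β| ≤ 625) (hc : |c - S * γ| ≤ 3375) (hn : n ≤ X)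
    (hm : m ≤ X) (hS : 0 ≤ S) (hε : |n * α - m * β + γ| ≤ ε) :
    ∃ N : ℤ, |((N * b + q * c : ℤ) : ℝ)| ≤
      X * (min (q * a % b) (b - q * a % b) : ℕ) + 1000 * q * X + 3375 * q + S * ε * q := by
  obtain ⟨k, hk⟩ := exists_abs_sub_mul_le_min (q * a) hb
  rw [Nat.cast_mul] at hk
  have form : |(n * a - m * b + c : ℝ)| ≤ S * ε + 1000 * X + 3375 := by
    have hn' : (n : ℝ) ≤ X := by exact_mod_cast hn
    have hm' : (m : ℝ) ≤ X := by exact_mod_cast hm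
    have main : |S * (n * α - m * β + γ)| ≤ S * ε := by
      rw [abs_mul, abs_of_nonneg hS]
      gcongr
    have first : |(n : ℝ) * (a - S * α)| ≤ X * 375 := by
      rw [abs_mul, Nat.abs_cast]
      gcongr
    have second : |(m : ℝ) * (b - S * β)| ≤ X * 625 := by
      rw [abs_mul, Nat.abs_cast]
      gcongr
    rw [abs_le] at *
    constructor <;> linarith
  have rounding : |(n : ℝ) * (q * a - k * b)| ≤ X * (min (q * a % b) (b - q * a % b) : ℕ) := by
    rw [abs_mul, Nat.abs_cast]
    gcongr
  refine ⟨n * k - q * m, ?_⟩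
  calc |(((n * k - q * m) * b + q * c : ℤ) : ℝ)|
      = |q * (n * a - m * b + c : ℝ) - n * (q * a - k * b)| := by push_cast; ring_nf
    _ ≤ |q * (n * a - m * b + c : ℝ)| + |(n : ℝ) * (q * a - k * b)| := abs_sub _ _
    _ ≤ q * (S * ε + 1000 * X + 3375) + X * (min (q * a % b) (b - q * a % b) : ℕ) := by
      rw [abs_mul, Nat.abs_cast]
      gcongr
    _ = _ := by ring

theorem gridCheck_sound {b T r u v q : ℕ} {us vs : List ℕ} {N : ℤ}
    (h : gridCheck b T (q * r % b) us vs) (hb : 0 < b) (hu : q * u % b ∈ us)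
    (hv : q * v % b ∈ vs) : T < |N * b + q * (r - u + v)| := by
  simp only [gridCheck, force_eq, List.all_eq_true, Nat.blt_eq] at h
  by_contra! hle
  refine (h _ hu _ hv).not_ge (mod_le_two_mul_of_modEq ?_ hle)
  have mod (k : ℕ) : ((q * k % b : ℕ) : ℤ) ≡ q * k [ZMOD b] := by
    exact_mod_cast Int.mod_modEq (q * k : ℕ) b
  have modulus : (b : ℤ) ≡ 0 [ZMOD b] := Int.modEq_zero_iff_dvd.2 dvd_rfl
  have := (((mod r).add (modulus.sub (mod u))).add_right T).add (mod v)
  rw [Nat.cast_add, Nat.cast_add, Nat.cast_add, Nat.cast_sub (Nat.mod_lt _ hb).le]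
  convert this using 1
  ring

theorem abs_inhomogeneous_sub_le {B r u w i j : ℕ}
    (hr : |(r : ℝ) - 2 ^ B * log (tribonacciDeriv / √5)| ≤ 3125)
    (hu : |(u : ℝ) + 2 ^ B * log (cofactor φ i)| ≤ 125)
    (hw : |(w : ℝ) + 2 ^ B * log (cofactor τ j)| ≤ 125) :
    |((r - u + w : ℤ) : ℝ) -
      2 ^ B * log (tribonacciDeriv * cofactor φ i / (√5 * cofactor τ j))| ≤ 3375 := by
  rw [log_cofactor_ratio_eq]
  rw [abs_le] at *
  push_cast
  constructor <;> linarith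

theorem lt_abs_logGap_of_reductionCheck {B Q X v D E n m i j : ℕ}
    (h : reductionCheck B Q X v D E) (hn : n ≤ X) (hmn : m + 1 ≤ n) (hi : i ≤ D) (hj : j ≤ E) :
    100 * (1 / 10 ^ v) < |logGap n m i j| := by
  simp only [reductionCheck, force_eq, forceList_eq, Bool.and_eq_true, Nat.blt_eq] at h
  generalize goldenInvCandidate (2 ^ B) = x at h
  generalize tribonacciInvCandidate (2 ^ B) = y at h
  obtain ⟨⟨⟨golden, tribonacci⟩, pos⟩, grid⟩ := h
  replace golden := goldenInvCheck_sound golden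
  replace tribonacci := tribonacciInvCheck_sound tribonacci
  have a_approx := abs_goldenLog_sub_le golden
  have b_approx := abs_tribonacciLog_sub_le tribonacci
  have r_approx := abs_constantLog_sub_le golden tribonacci
  generalize goldenLog B x = a at *
  generalize tribonacciLog B y = b at *
  generalize constantLog B x y a b = r at *
  generalize convergentDenom Q (10 * B) a b 0 1 = q at *
  obtain ⟨u, u_approx, hu⟩ := exists_mem_residueTable_cofactor (by positivity)
    (goldenRatio_inv_lt.le.trans (by norm_num)) golden (b := b) (q := q) hi
  obtain ⟨w, w_approx, hw⟩ := exists_mem_residueTable_cofactor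
    (inv_nonneg.2 tribonacciConst_pos.le) (tribonacciConst_inv_lt.le.trans (by norm_num))
    tribonacci (b := b) (q := q) hj
  by_contra! hle
  rw [logGap_eq] at hle
  obtain ⟨N, hN⟩ := exists_abs_mul_add_le pos a_approx b_approx
    (abs_inhomogeneous_sub_le r_approx u_approx w_approx) hn (hmn.trans hn) (by positivity) hle
    (q := q)
  refine (gridCheck_sound grid pos hu hw (N := N)).not_ge ?_
  rw [← Int.cast_le (R := ℝ), Int.cast_abs, Int.cast_natCast]
  refine hN.trans ?_
  have rounding := (IsLowerApprox.natDiv (100 * 2 ^ B * q) (10 ^ v)).2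
  unfold reductionTolerance
  have digits : (2 : ℝ) ^ B * (100 * (1 / 10 ^ v)) * q = 100 * 2 ^ B * q / 10 ^ v := by ring
  push_cast at rounding ⊢
  rw [digits, add_assoc _ _ 1]
  gcongr

end ReductionSoundness

section Descent

open Real

theorem BakerRange.of_monomial {n t a b c f p r : ℕ} (ht : 10 ≤ t) (large : 10 ^ p * t ^ r ≤ n)
    (square : n * (n + 1) ≤ 3 ^ t) (hbf : b + 1 ≤ 10 * f) (hac : a + b + 1 ≤ 10 * c + 10 * f)
    (hp : a + 2 * c + 14 ≤ p) (hr : b + 2 * f + 1 ≤ r) :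
    BakerRange (10 ^ a * t ^ b) t (10 ^ c * t ^ f) n := by
  have lower : 64 * 10 ^ 12 * (10 ^ a * t ^ b) * t * (10 ^ c * t ^ f) ^ 2 ≤ n :=
    calc _ = 64 * 10 ^ 12 * 10 ^ (a + 2 * c) * t ^ (b + 2 * f + 1) := by ring
      _ ≤ 10 ^ 14 * 10 ^ (a + 2 * c) * t ^ (b + 2 * f + 1) := by
        gcongr
        norm_num
      _ = 10 ^ (a + 2 * c + 14) * t ^ (b + 2 * f + 1) := by ring
      _ ≤ 10 ^ p * t ^ r :=
        Nat.mul_le_mul (Nat.pow_le_pow_right (by norm_num) hp) (Nat.pow_le_pow_right (by omega) hr)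
      _ ≤ n := large
  obtain ⟨k, hk⟩ := Nat.exists_eq_add_of_le hbf
  refine ⟨by omega, Nat.succ_le_of_lt (by positivity), ?_,
    (Nat.mul_le_mul_right _ lower).trans square, lower⟩
  calc 10 ^ a * t ^ b * t = 10 ^ a * t ^ (b + 1) := by ring
    _ ≤ 10 ^ (10 * c + k) * t ^ (b + 1) :=
      Nat.mul_le_mul_right _ (Nat.pow_le_pow_right (by norm_num) (by omega))
    _ = 10 ^ (10 * c) * (10 ^ k * t ^ (b + 1)) := by rw [pow_add, mul_assoc]
    _ ≤ 10 ^ (10 * c) * (t ^ k * t ^ (b + 1)) := by gcongr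
    _ = 10 ^ (10 * c) * t ^ (10 * f) := by rw [hk, ← pow_add, add_comm k]
    _ = (10 ^ c * t ^ f) ^ 10 := by ring

theorem BakerRange.of_le_of_lt {G t w n X Y : ℕ} (one_le_t : 1 ≤ t) (one_le_w : 1 ≤ w)
    (mul_le : G * t ≤ w ^ 10) (upper : 64 * 10 ^ 12 * G * t * w ^ 2 * Y ≤ 3 ^ t)
    (lower : 64 * 10 ^ 12 * G * t * w ^ 2 ≤ X) (hX : X ≤ n) (hY : n < Y) : BakerRange G t w n :=
  ⟨one_le_t, one_le_w, mul_le, (Nat.mul_le_mul_left _ hY).trans upper, lower.trans hX⟩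

theorem bakerBound_monomial_lt (a b c f : ℕ) {t : ℕ} (ht : 1 ≤ t) :
    bakerBound (10 ^ a * t ^ b) t (10 ^ c * t ^ f) <
      10 ^ (3 * a + 9 * c + 60) * t ^ (3 * b + 9 * f + 5) := by
  calc _ = 723 * 10 ^ 57 * (10 ^ (3 * a + 9 * c) * t ^ (3 * b + 9 * f + 5)) := by
        unfold bakerBound
        ring
    _ < 10 ^ 60 * (10 ^ (3 * a + 9 * c) * t ^ (3 * b + 9 * f + 5)) := by
        gcongr
        norm_num
    _ = _ := by ring

theorem add_two_pow_le_three_mul_pow {k r : ℕ} (hr : r ≤ k + 1) :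
    (2 * (k + 1) + 2) ^ r ≤ 3 * (2 * k + 2) ^ r := by
  suffices (2 * (k + 1) + 2 : ℝ) ^ r ≤ 3 * (2 * k + 2) ^ r by exact_mod_cast this
  have hpos : (0 : ℝ) < k + 1 := by positivity
  calc (2 * (k + 1) + 2 : ℝ) ^ r = ((1 / (k + 1) + 1) * (2 * k + 2)) ^ r := by
        congr 1
        field_simp
        ring
    _ ≤ (exp (1 / (k + 1)) * (2 * k + 2)) ^ r := by
        gcongr
        exact add_one_le_exp _
    _ = exp (r / (k + 1)) * (2 * k + 2) ^ r := by rw [mul_pow, ← exp_nat_mul, mul_one_div]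
    _ ≤ exp 1 * (2 * k + 2) ^ r := by
        gcongr
        rw [div_le_one hpos]
        exact_mod_cast hr
    _ ≤ 3 * (2 * k + 2) ^ r := by
        gcongr
        linarith [exp_one_lt_d9]

set_option exponentiation.threshold 5000 in
theorem ten_pow_mul_pow_le_three_pow {k : ℕ} (hk : 4920 ≤ k) :
    10 ^ 1297 * (2 * k + 2) ^ 263 ≤ 3 ^ k := by
  induction k, hk using Nat.le_induction with
  | base => norm_num
  | succ k hk ih =>
    calc 10 ^ 1297 * (2 * (k + 1) + 2) ^ 263 ≤ 10 ^ 1297 * (3 * (2 * k + 2) ^ 263) :=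
          Nat.mul_le_mul_left _ (add_two_pow_le_three_mul_pow (by omega))
      _ = 3 * (10 ^ 1297 * (2 * k + 2) ^ 263) := mul_left_comm _ _ _
      _ ≤ 3 * 3 ^ k := Nat.mul_le_mul_left 3 ih
      _ = 3 ^ (k + 1) := (pow_succ' 3 k).symm

namespace Coincidence

variable {n m d e v w : ℕ}

theorem lt_of_lt_abs_logGap (S : Coincidence n m d e)
    (h : 100 * (1 / 10 ^ v) < |logGap n m d e|) : n < 5 * v := by
  contrapose! h
  exact S.abs_logGap_le h

theorem lt_and_lt_of_lt_abs_logGap (S : Coincidence n m d e) (hvw : v ≤ w)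
    (h : 100 * (1 / 10 ^ v) < |logGap n m 0 0|)
    (hd : d < 5 * v → 100 * (1 / 10 ^ w) < |logGap n m d 0|)
    (he : e < 4 * v → 100 * (1 / 10 ^ w) < |logGap n m 0 e|) : d < 5 * w ∧ e < 4 * w := by
  have small : d < 5 * v ∨ e < 4 * v := by
    contrapose! h
    exact S.abs_logGap_zero_zero_le h.1 h.2
  rcases small with small | small
  · refine ⟨by omega, ?_⟩
    by_contra! hle
    exact (hd small).not_ge (S.abs_logGap_right_zero_le hle)
  · refine ⟨?_, by omega⟩
    by_contra! hle
    exact (he small).not_ge (S.abs_logGap_zero_left_le hle)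

theorem lt_of_reductionCheck {B Q X : ℕ} (S : Coincidence n m d e)
    (h : reductionCheck B Q X v (5 * v) (4 * v)) (hn : n ≤ X) : n < 5 * v := by
  have gap {i j : ℕ} (hi : i ≤ 5 * v) (hj : j ≤ 4 * v) :=
    lt_abs_logGap_of_reductionCheck h hn S.succ_m_le hi hj
  have ⟨hd, he⟩ := S.lt_and_lt_of_lt_abs_logGap le_rfl (gap (Nat.zero_le _) (Nat.zero_le _))
    (fun hd => gap hd.le (Nat.zero_le _)) (fun he => gap (Nat.zero_le _) he.le)
  exact S.lt_of_lt_abs_logGap (gap hd.le he.le)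

theorem lt_abs_logGap_of_monomial {a b c f p r i j t : ℕ} (S : Coincidence n m d e)
    (ht : 10 ≤ t) (large : 10 ^ p * t ^ r ≤ n) (square : n * (n + 1) ≤ 3 ^ t)
    (hbf : b + 1 ≤ 10 * f) (hac : a + b + 1 ≤ 10 * c + 10 * f) (hp : a + 2 * c + 14 ≤ p)
    (hr : b + 2 * f + 1 ≤ r) (hi : i + 5 ≤ 10 ^ a * t ^ b) (hj : j + 5 ≤ 10 ^ a * t ^ b)
    (hv : v = 10 ^ (3 * a + 9 * c + 60) * t ^ (3 * b + 9 * f + 5)) :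
    100 * (1 / 10 ^ v) < |logGap n m i j| := by
  have bound_lt : bakerBound (10 ^ a * t ^ b) t (10 ^ c * t ^ f) < v := by
    rw [hv]
    exact bakerBound_monomial_lt a b c f (by omega)
  exact (BakerRange.of_monomial ht large square hbf hac hp hr).lt_abs_logGap hi hj S.succ_m_le
    bound_lt

set_option exponentiation.threshold 2000 in
theorem lt_ten_pow_mul_pow (S : Coincidence n m d e) {t : ℕ} (ht : 10 ≤ t)
    (square : n * (n + 1) ≤ 3 ^ t) : n < 10 ^ 1297 * t ^ 263 := by
  by_contra! large
  obtain ⟨v, hv⟩ : ∃ v, v = 10 ^ 63 * t ^ 14 := ⟨_, rfl⟩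
  obtain ⟨w, hw⟩ : ∃ w, w = 10 ^ 315 * t ^ 65 := ⟨_, rfl⟩
  obtain ⟨z, hz⟩ : ∃ z, z = 10 ^ 1296 * t ^ 263 := ⟨_, rfl⟩
  have first : 100 * (1 / 10 ^ v) < |logGap n m 0 0| :=
    S.lt_abs_logGap_of_monomial (a := 1) (b := 0) (c := 0) (f := 1) ht large square
      (by norm_num) (by norm_num) (by norm_num) (by norm_num) (by norm_num) (by norm_num) hv
  have second {i j : ℕ} (hi : i + 5 ≤ 10 * v) (hj : j + 5 ≤ 10 * v) :
      100 * (1 / 10 ^ w) < |logGap n m i j| := by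
    rw [hv, ← mul_assoc, ← pow_succ'] at hi hj
    exact S.lt_abs_logGap_of_monomial (a := 64) (b := 14) (c := 7) (f := 2) ht large square
      (by norm_num) (by norm_num) (by norm_num) (by norm_num) hi hj hw
  have third {i j : ℕ} (hi : i + 5 ≤ 10 * w) (hj : j + 5 ≤ 10 * w) :
      100 * (1 / 10 ^ z) < |logGap n m i j| := by
    rw [hw, ← mul_assoc, ← pow_succ'] at hi hj
    exact S.lt_abs_logGap_of_monomial (a := 316) (b := 65) (c := 32) (f := 7) ht large square
      (by norm_num) (by norm_num) (by norm_num) (by norm_num) hi hj hz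
  have one_le_v : 1 ≤ v := by
    rw [hv]
    exact Nat.succ_le_of_lt (by positivity)
  have v_le_w : v ≤ w := by
    rw [hv, hw]
    exact Nat.mul_le_mul (Nat.pow_le_pow_right (by norm_num) (by norm_num))
      (Nat.pow_le_pow_right (by omega) (by norm_num))
  obtain ⟨hd, he⟩ := S.lt_and_lt_of_lt_abs_logGap v_le_w first
    (fun hd => second (by omega) (by omega)) (fun he => second (by omega) (by omega))
  have n_lt := S.lt_of_lt_abs_logGap (third (by omega) (by omega))
  rw [pow_succ' 10 1296, mul_assoc, ← hz] at large
  omega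

set_option exponentiation.threshold 5000 in
theorem lt_three_pow (S : Coincidence n m d e) : n < 3 ^ 4920 := by
  have n_ne_zero : n ≠ 0 := by have := S.thirty_le; omega
  have lower := Nat.pow_log_le_self 3 n_ne_zero
  have upper := Nat.lt_pow_succ_log_self (by norm_num : 1 < 3) n
  generalize Nat.log 3 n = k at lower upper
  have square : n * (n + 1) ≤ 3 ^ (2 * k + 2) :=
    calc n * (n + 1) ≤ 3 ^ (k + 1) * 3 ^ (k + 1) := Nat.mul_le_mul upper.le upper
      _ = 3 ^ (2 * k + 2) := by ring
  by_contra! hn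
  have hk : 4920 ≤ k :=
    Nat.le_of_lt_succ ((Nat.pow_lt_pow_iff_right (by norm_num)).1 (hn.trans_lt upper))
  have lt_monomial := S.lt_ten_pow_mul_pow (by omega) square
  exact ((lower.trans_lt lt_monomial).trans_le (ten_pow_mul_pow_le_three_pow hk)).false

set_option exponentiation.threshold 20000 in
theorem lt_ten_pow_468 (S : Coincidence n m d e) : n < 10 ^ 468 := by
  by_contra! hn
  have n_lt : n < 10 ^ 2348 := S.lt_three_pow.trans (by norm_num)
  have reduction : reductionCheck 15650 (10 ^ 2351) (10 ^ 2348) 2355 0 0 := by decide +kernel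
  have first : 100 * (1 / 10 ^ 2355) < |logGap n m 0 0| :=
    lt_abs_logGap_of_reductionCheck reduction n_lt.le S.succ_m_le le_rfl le_rfl
  have range : BakerRange 11800 4970 6 n :=
    .of_le_of_lt (by norm_num) (by norm_num) (by norm_num) (by norm_num) (by norm_num) hn n_lt
  have second {i j : ℕ} (hi : i + 5 ≤ 11800) (hj : j + 5 ≤ 11800) :
      100 * (1 / 10 ^ (39 * 10 ^ 96)) < |logGap n m i j| :=
    range.lt_abs_logGap hi hj S.succ_m_le (by norm_num [bakerBound])
  have range' : BakerRange (2 * 10 ^ 98) 5210 (16 * 10 ^ 9) n :=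
    .of_le_of_lt (by norm_num) (by norm_num) (by norm_num) (by norm_num) (by norm_num) hn n_lt
  obtain ⟨hd, he⟩ := S.lt_and_lt_of_lt_abs_logGap (by norm_num) first
    (fun hd => second (by omega) (by omega)) (fun he => second (by omega) (by omega))
  have third : 100 * (1 / 10 ^ (2 * 10 ^ 467)) < |logGap n m d e| :=
    range'.lt_abs_logGap (by omega) (by omega) S.succ_m_le (by norm_num [bakerBound])
  exact (S.lt_of_lt_abs_logGap third).not_ge ((by norm_num : _ ≤ _).trans hn)

set_option exponentiation.threshold 20000 in
theorem lt_ten_pow_93 (S : Coincidence n m d e) : n < 10 ^ 93 := by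
  by_contra! hn
  have n_lt := S.lt_ten_pow_468
  have n_le : n ≤ 10 ^ 468 := n_lt.le
  have reduction : reductionCheck 3190 (10 ^ 473) (10 ^ 468) 481 2405 0 := by decide +kernel
  have reduction' : reductionCheck 3190 (10 ^ 473) (10 ^ 468) 481 0 1924 := by decide +kernel
  have gap {i : ℕ} (hi : i ≤ 2405) : 100 * (1 / 10 ^ 481) < |logGap n m i 0| :=
    lt_abs_logGap_of_reductionCheck reduction n_le S.succ_m_le hi le_rfl
  have gap' {j : ℕ} (hj : j ≤ 1924) : 100 * (1 / 10 ^ 481) < |logGap n m 0 j| :=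
    lt_abs_logGap_of_reductionCheck reduction' n_le S.succ_m_le (Nat.zero_le _) hj
  obtain ⟨hd, he⟩ := S.lt_and_lt_of_lt_abs_logGap le_rfl (gap (by omega))
    (fun hd => gap hd.le) (fun he => gap' he.le)
  have range : BakerRange 2410 1030 5 n :=
    .of_le_of_lt (by norm_num) (by norm_num) (by norm_num) (by norm_num) (by norm_num) hn n_lt
  have last : 100 * (1 / 10 ^ (2 * 10 ^ 92)) < |logGap n m d e| :=
    range.lt_abs_logGap (by omega) (by omega) S.succ_m_le (by norm_num [bakerBound])
  exact (S.lt_of_lt_abs_logGap last).not_ge ((by norm_num : _ ≤ _).trans hn)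

set_option exponentiation.threshold 20000 in
theorem lt_550 (S : Coincidence n m d e) : n < 550 :=
  S.lt_of_reductionCheck (by decide +kernel : reductionCheck 690 (10 ^ 100) (10 ^ 93) 110 550 440)
    S.lt_ten_pow_93.le

theorem lt_60 (S : Coincidence n m d e) : n < 60 :=
  S.lt_of_reductionCheck (by decide +kernel : reductionCheck 80 (10 ^ 6) 550 12 60 48) S.lt_550.le

end Coincidence

end Descent

section SmallIndices

/-- The integers with at least two representations as `F n - T m`. -/
def exceptionalValues : List ℤ :=
  [0, 1, -1, -2, -3, 4, -5, 6, 8, -10, 11, -11, -22, -23, -41, -60, -271]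

theorem trib_add_three (m : ℕ) : trib (m + 3) = trib (m + 2) + trib (m + 1) + trib m := rfl

theorem trib_nonneg (m : ℕ) : 0 ≤ trib m := by
  induction m using trib.induct with
  | case4 m h₂ h₁ h₀ => rw [trib_add_three]; positivity
  | _ => decide

theorem trib_monotone : Monotone trib :=
  monotone_nat_of_le_succ fun m => by
    match m with
    | 0 | 1 => decide
    | m + 2 => rw [trib_add_three]; linarith [trib_nonneg m, trib_nonneg (m + 1)]

theorem trib_lt_succ {m : ℕ} (hm : 2 ≤ m) : trib m < trib (m + 1) := by
  obtain ⟨k, rfl⟩ := Nat.exists_eq_add_of_le' hm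
  have : trib 1 ≤ trib (k + 1) := trib_monotone (by omega)
  have : trib 1 = 1 := rfl
  linarith [trib_add_three k, trib_nonneg k]

theorem trib_strictMonoOn : StrictMonoOn trib (Set.Ici 2) :=
  fun _ hm _ _ hlt => (trib_lt_succ hm).trans_le (trib_monotone hlt)

theorem trib_sub_two_le {m m₁ : ℕ} (h₁ : 2 ≤ m₁) (h : m₁ < m) :
    trib (m - 2) ≤ trib m - trib m₁ := by
  obtain ⟨k, rfl⟩ := Nat.exists_eq_add_of_le' (by omega : 3 ≤ m)
  have : trib m₁ ≤ trib (k + 2) := trib_monotone (by omega)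
  rw [Nat.add_sub_assoc (by norm_num), trib_add_three]
  linarith [trib_nonneg k]

theorem fib_sub_two_le {n n₁ : ℕ} (h₁ : 2 ≤ n₁) (h : n₁ < n) :
    (Nat.fib (n - 2) : ℤ) ≤ Nat.fib n - Nat.fib n₁ := by
  obtain ⟨k, rfl⟩ := Nat.exists_eq_add_of_le' (by omega : 2 ≤ n)
  have : Nat.fib n₁ ≤ Nat.fib (k + 1) := Nat.fib_mono (by omega)
  rw [Nat.add_sub_cancel, Nat.fib_add_two]
  push_cast
  omega

theorem fib_le_trib (n : ℕ) : (Nat.fib n : ℤ) ≤ trib n := by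
  induction n using trib.induct with
  | case4 n h₂ h₁ h₀ =>
    rw [Nat.fib_add_two, trib_add_three]
    push_cast
    linarith [trib_nonneg n]
  | _ => decide

theorem fib_sub_trib_mem_of_lt : ∀ n ∈ Finset.range 60, ∀ m ∈ Finset.range 62,
    (Nat.fib (n - 2) : ℤ) ≤ trib m → trib (m - 2) ≤ Nat.fib n →
    ∀ n₁ ∈ Finset.Ico 2 n, ∀ m₁ ∈ Finset.Ico 2 m,
    (Nat.fib n : ℤ) - trib m = Nat.fib n₁ - trib m₁ →
    (Nat.fib n : ℤ) - trib m ∈ exceptionalValues := by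
  decide +kernel

end SmallIndices

section Representations

variable {n m n₁ m₁ : ℕ}

theorem lt_of_fib_sub_trib_eq (hn₁ : 2 ≤ n₁) (hlt : n₁ < n)
    (h : (Nat.fib n : ℤ) - trib m = Nat.fib n₁ - trib m₁) : m₁ < m := by
  have : (Nat.fib n₁ : ℤ) < Nat.fib n := by exact_mod_cast (Nat.fib_lt_fib hn₁).2 hlt
  by_contra! hle
  linarith [trib_monotone hle]

theorem lt_sixty_of_fib_sub_trib_eq (hn₁ : 2 ≤ n₁) (hm₁ : 2 ≤ m₁) (hn : n₁ < n) (hm : m₁ < m)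
    (h : (Nat.fib n : ℤ) - trib m = Nat.fib n₁ - trib m₁) : n < 60 := by
  by_contra! hle
  refine (Coincidence.lt_60 (n := n) (m := m) (d := n - n₁) (e := m - m₁)
    ⟨by omega, by omega, by omega, by omega, by omega, ?_⟩).not_ge hle
  rwa [Nat.sub_sub_self hn.le, Nat.sub_sub_self hm.le]

theorem le_add_two_of_trib_sub_two_le (hn : 2 ≤ n) (h : trib (m - 2) ≤ Nat.fib n) : m ≤ n + 2 := by
  by_contra! hlt
  have : trib n < trib (m - 2) :=
    trib_strictMonoOn hn (Set.mem_Ici.2 (by omega)) (by omega)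
  exact ((h.trans (fib_le_trib n)).trans_lt this).false

theorem fib_sub_trib_mem_of_fib_sub_trib_eq (hn₁ : 2 ≤ n₁) (hm₁ : 2 ≤ m₁) (hlt : n₁ < n)
    (h : (Nat.fib n : ℤ) - trib m = Nat.fib n₁ - trib m₁) :
    (Nat.fib n : ℤ) - trib m ∈ exceptionalValues := by
  have m_lt := lt_of_fib_sub_trib_eq hn₁ hlt h
  have n_lt := lt_sixty_of_fib_sub_trib_eq hn₁ hm₁ hlt m_lt h
  have fib_le : (Nat.fib (n - 2) : ℤ) ≤ trib m := by
    linarith [fib_sub_two_le hn₁ hlt, trib_nonneg m₁]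
  have trib_le : trib (m - 2) ≤ Nat.fib n := by linarith [trib_sub_two_le hm₁ m_lt]
  have m_le := le_add_two_of_trib_sub_two_le (by omega) trib_le
  exact fib_sub_trib_mem_of_lt n (Finset.mem_range.2 n_lt) m (Finset.mem_range.2 (by omega))
    fib_le trib_le n₁ (Finset.mem_Ico.2 ⟨hn₁, hlt⟩) m₁ (Finset.mem_Ico.2 ⟨hm₁, m_lt⟩) h

/-- Two different index pairs `(n, m)` and `(n₁, m₁)` for each exceptional value, in order. -/
def exceptionalIndices : List ((ℕ × ℕ) × ℕ × ℕ) :=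
  [((2, 2), 3, 3), ((3, 2), 4, 3), ((2, 3), 4, 4), ((3, 4), 5, 5), ((2, 4), 8, 7), ((5, 2), 6, 4),
    ((3, 5), 6, 6), ((6, 3), 7, 5), ((8, 6), 11, 9), ((4, 6), 9, 8), ((7, 3), 10, 8),
    ((3, 6), 7, 7), ((3, 7), 26, 21), ((2, 7), 8, 8), ((4, 8), 13, 11), ((8, 9), 11, 10),
    ((4, 11), 13, 12)]

theorem exists_two_indices_of_mem : ∀ c ∈ exceptionalValues, ∃ p ∈ exceptionalIndices,
    (2 ≤ p.1.1 ∧ 2 ≤ p.1.2 ∧ 2 ≤ p.2.1 ∧ 2 ≤ p.2.2) ∧ p.1 ≠ p.2 ∧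
      c = Nat.fib p.1.1 - trib p.1.2 ∧ c = Nat.fib p.2.1 - trib p.2.2 := by
  decide +kernel

end Representations

/-- An integer `c` has at least two representations of the form `F n - T m` with
`n, m ≥ 2` iff `c` lies in the given finite set. -/
theorem fib_sub_trib_two_representations (c : ℤ) :
    (∃ n m n₁ m₁ : ℕ, 2 ≤ n ∧ 2 ≤ m ∧ 2 ≤ n₁ ∧ 2 ≤ m₁ ∧ (n, m) ≠ (n₁, m₁) ∧
      c = (Nat.fib n : ℤ) - trib m ∧ c = (Nat.fib n₁ : ℤ) - trib m₁) ↔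
    c ∈ ({0, 1, -1, -2, -3, 4, -5, 6, 8, -10, 11, -11, -22, -23, -41, -60, -271} : Set ℤ) := by
  have mem_iff : c ∈ ({0, 1, -1, -2, -3, 4, -5, 6, 8, -10, 11, -11, -22, -23, -41, -60, -271} :
      Set ℤ) ↔ c ∈ exceptionalValues := by simp [exceptionalValues]
  rw [mem_iff]
  constructor
  · rintro ⟨n, m, n₁, m₁, hn, hm, hn₁, hm₁, hne, h, h₁⟩
    rcases lt_trichotomy n₁ n with hlt | rfl | hlt
    · rw [h]
      exact fib_sub_trib_mem_of_fib_sub_trib_eq hn₁ hm₁ hlt (h ▸ h₁)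
    · exact (hne (by rw [trib_strictMonoOn.injOn hm hm₁ (by linarith)])).elim
    · rw [h₁]
      exact fib_sub_trib_mem_of_fib_sub_trib_eq hn hm hlt (h₁ ▸ h)
  · intro hc
    obtain ⟨p, -, ⟨hn, hm, hn₁, hm₁⟩, hne, h, h₁⟩ := exists_two_indices_of_mem c hc
    exact ⟨p.1.1, p.1.2, p.2.1, p.2.2, hn, hm, hn₁, hm₁, hne, h, h₁⟩
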